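/- Let n ≥ 1, ρ > 0, and let μ = exp(−V(x)) dx be a probability measure on Euclidean space ℝⁿ, where V : ℝⁿ → ℝ is smooth and the function x ↦ (ρ/2)|x|² − V(x) is convex (i.e. ∇²V ≤ ρ·Id). Then for every k ≥ 1, λ_k^Lip(ℝⁿ,|·|,μ) ≤ λ_k^Lip(ℝⁿ,|·|,γ_ρⁿ). -/

import Mathlib

open MeasureTheory Filter Topology ENNReal

/-- The local Lipschitz constant `|∇f|(x) = limsup_{y→x} |f(y)-f(x)|/d(y,x)`
(equal to `0` at isolated points, by the convention `Real.sInf ∅ = 0`). -/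
noncomputable def localLip {Ω : Type*} [PseudoMetricSpace Ω] (f : Ω → ℝ) (x : Ω) : ℝ :=
  Filter.limsup (fun y => |f y - f x| / dist y x) (nhdsWithin x {x}ᶜ)

/-- Membership in the metric Sobolev space `W^{1,2}_Lip(Ω,d,μ)`. -/
def memW12Lip {Ω : Type*} [PseudoMetricSpace Ω] [MeasurableSpace Ω]
    (μ : Measure Ω) (f : Ω → ℝ) : Prop :=
  LocallyLipschitz f ∧
    (∫⁻ x, ENNReal.ofReal ((f x) ^ 2) ∂μ) + (∫⁻ x, ENNReal.ofReal ((localLip f x) ^ 2) ∂μ) < ⊤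

/-- The `k`-th metric eigenvalue `λ_k^Lip(Ω,d,μ)`: the infimum over `k`-dimensional
linear subspaces `F ⊆ W^{1,2}_Lip` of the supremum of the Rayleigh quotient over `F`. -/
noncomputable def lambdaLip {Ω : Type*} [PseudoMetricSpace Ω] [MeasurableSpace Ω]
    (μ : Measure Ω) (k : ℕ) : ℝ :=
  sInf { a : ℝ | ∃ F : Submodule ℝ (Ω → ℝ), Module.finrank ℝ F = k ∧
    (∀ f ∈ F, memW12Lip μ f) ∧
    a = sSup { r : ℝ | ∃ f ∈ F, (∫ x, (f x) ^ 2 ∂μ) ≠ 0 ∧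
      r = (∫ x, (localLip f x) ^ 2 ∂μ) / (∫ x, (f x) ^ 2 ∂μ) } }

/-- The Gaussian probability measure `γ_ρⁿ` on `ℝⁿ`, with density proportional to
`exp(-ρ|x|²/2)` with respect to Lebesgue measure, normalized to total mass one. -/
noncomputable def gaussRho (n : ℕ) (ρ : ℝ) : Measure (EuclideanSpace ℝ (Fin n)) :=
  ((volume.withDensity fun x : EuclideanSpace ℝ (Fin n) =>
      ENNReal.ofReal (Real.exp (-ρ * ‖x‖ ^ 2 / 2))) Set.univ)⁻¹ •
    volume.withDensity fun x : EuclideanSpace ℝ (Fin n) =>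
      ENNReal.ofReal (Real.exp (-ρ * ‖x‖ ^ 2 / 2))

/-!
Both eigenvalues are compared with `ρ * m`, where `dim P_m < k ≤ dim P_{m+1}` and `P_j` is the space
of polynomials of degree less than `j`. For a potential `W`, let `L f = ⟨∇f, ∇W⟩ - Δf`, so that
`∫ ⟨∇f, ∇g⟩ e^{-W} = ∫ f (L g) e^{-W}`.

*Upper bound.* If `∇²W ≤ ρ` and `e^{-W}` decays exponentially, Bochner's formula gives
`∫ (L f)² ≤ ρ ∫ |∇f|² + ∑ᵢ ∫ |∇∂ᵢf|²`. As `∂ᵢ` lowers the degree, induction and Cauchy–Schwarz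
yield `∫ |∇f|² ≤ ρ m ∫ f²` on `P_{m+1}`. Polynomials need not be square integrable for `μ`, so the
test functions are `f e^{-εs}` with `s = √(1 + |x|²)`. This replaces `V` by `W = V + 2εs`, whose
Hessian is at most `ρ + 2ε` because `(s - 1)² = |x|² - 2s + 2` is convex, and one lets `ε → 0`.

*Lower bound.* For the Gaussian, `L = ρ ⟨x, ∇⟩ - Δ` acts on `P_{M+1} / P_M` as multiplication by
`ρ M`. Since polynomials are dense in `L²`, every `f` orthogonal to `P_m` has
`ρ m ∫ f² ≤ ∫ |∇f|²`, and each `k`-dimensional space contains such an `f ≠ 0`.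
-/

/-! ### Partial derivatives -/

section PartialDeriv

variable {ι : Type*} [Fintype ι]

/-- The partial derivative of `f` in the direction of the `i`-th vector of the standard basis,
with the convention of `fderiv` that it vanishes where `f` is not differentiable. -/
noncomputable def partialDeriv (i : ι) (f : EuclideanSpace ℝ ι → ℝ) (x : EuclideanSpace ℝ ι) : ℝ :=
  fderiv ℝ f x (EuclideanSpace.basisFun ι ℝ i)

/-- The carré du champ `Γ(f, g) = ⟨∇f, ∇g⟩`. -/
noncomputable def carreDuChamp (f g : EuclideanSpace ℝ ι → ℝ) (x : EuclideanSpace ℝ ι) : ℝ :=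
  ∑ i, partialDeriv i f x * partialDeriv i g x

variable {f g : EuclideanSpace ℝ ι → ℝ} {x : EuclideanSpace ℝ ι}

theorem partialDeriv_const (i : ι) (c : ℝ) (x : EuclideanSpace ℝ ι) :
    partialDeriv i (fun _ => c) x = 0 := by
  simp [partialDeriv]

theorem partialDeriv_add (i : ι) (hf : DifferentiableAt ℝ f x) (hg : DifferentiableAt ℝ g x) :
    partialDeriv i (fun y => f y + g y) x = partialDeriv i f x + partialDeriv i g x := by
  simp [partialDeriv, fderiv_fun_add hf hg]

theorem partialDeriv_sub (i : ι) (hf : DifferentiableAt ℝ f x) (hg : DifferentiableAt ℝ g x) :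
    partialDeriv i (fun y => f y - g y) x = partialDeriv i f x - partialDeriv i g x := by
  simp [partialDeriv, fderiv_fun_sub hf hg]

theorem partialDeriv_const_mul (i : ι) (c : ℝ) (hf : DifferentiableAt ℝ f x) :
    partialDeriv i (fun y => c * f y) x = c * partialDeriv i f x := by
  simp [partialDeriv, fderiv_const_mul hf]

theorem partialDeriv_mul (i : ι) (hf : DifferentiableAt ℝ f x) (hg : DifferentiableAt ℝ g x) :
    partialDeriv i (fun y => f y * g y) x =
      partialDeriv i f x * g x + f x * partialDeriv i g x := by
  simp only [partialDeriv, fderiv_fun_mul hf hg, add_apply,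
    smul_apply, smul_eq_mul]
  ring

theorem partialDeriv_sum (i : ι) {κ : Type*} (s : Finset κ) {F : κ → EuclideanSpace ℝ ι → ℝ}
    (hF : ∀ k ∈ s, DifferentiableAt ℝ (F k) x) :
    partialDeriv i (fun y => ∑ k ∈ s, F k y) x = ∑ k ∈ s, partialDeriv i (F k) x := by
  simp [partialDeriv, fderiv_fun_sum hF]

theorem contDiff_partialDeriv {m n : WithTop ℕ∞} (hf : ContDiff ℝ n f) (hmn : m + 1 ≤ n) (i : ι) :
    ContDiff ℝ m (partialDeriv i f) :=
  (hf.fderiv_right hmn).clm_apply contDiff_const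

theorem norm_fderiv_sq (f : EuclideanSpace ℝ ι → ℝ) (x : EuclideanSpace ℝ ι) :
    ‖fderiv ℝ f x‖ ^ 2 = carreDuChamp f f x := by
  rw [← (InnerProductSpace.toDual ℝ (EuclideanSpace ℝ ι)).symm.norm_map,
    ← (EuclideanSpace.basisFun ι ℝ).sum_sq_norm_inner_left]
  simp only [InnerProductSpace.toDual_symm_apply, Real.norm_eq_abs, sq_abs, carreDuChamp,
    partialDeriv, ← pow_two]

theorem sq_partialDeriv_le (i : ι) (f : EuclideanSpace ℝ ι → ℝ) (x : EuclideanSpace ℝ ι) :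
    partialDeriv i f x ^ 2 ≤ carreDuChamp f f x := by
  simpa only [pow_two, carreDuChamp] using Finset.single_le_sum
    (f := fun i => partialDeriv i f x * partialDeriv i f x)
    (fun i _ => mul_self_nonneg _) (Finset.mem_univ i)

theorem partialDeriv_partialDeriv (hf : ContDiff ℝ 2 f) (i j : ι) (x : EuclideanSpace ℝ ι) :
    partialDeriv i (partialDeriv j f) x =
      fderiv ℝ (fderiv ℝ f) x (EuclideanSpace.basisFun ι ℝ i) (EuclideanSpace.basisFun ι ℝ j) := by
  have hd : DifferentiableAt ℝ (fderiv ℝ f) x :=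
    (hf.fderiv_right one_add_one_eq_two.le).differentiable one_ne_zero x
  change fderiv ℝ (fun y => fderiv ℝ f y (EuclideanSpace.basisFun ι ℝ j)) x _ = _
  simp [fderiv_clm_apply hd (differentiableAt_const _)]

theorem partialDeriv_comm (hf : ContDiff ℝ 2 f) (i j : ι) (x : EuclideanSpace ℝ ι) :
    partialDeriv i (partialDeriv j f) x = partialDeriv j (partialDeriv i f) x := by
  have hsymm : IsSymmSndFDerivAt ℝ f x := hf.contDiffAt.isSymmSndFDerivAt (by simp)
  rw [partialDeriv_partialDeriv hf, partialDeriv_partialDeriv hf, hsymm.eq]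

theorem fderiv_fderiv_apply_eq_sum (hf : ContDiff ℝ 2 f) (x v w : EuclideanSpace ℝ ι) :
    fderiv ℝ (fderiv ℝ f) x v w = ∑ i, ∑ j, v i * w j * partialDeriv i (partialDeriv j f) x := by
  conv_lhs => rw [← (EuclideanSpace.basisFun ι ℝ).sum_repr v,
    ← (EuclideanSpace.basisFun ι ℝ).sum_repr w]
  simp only [EuclideanSpace.basisFun_repr, map_sum, map_smul, sum_apply, smul_apply, smul_eq_mul,
    partialDeriv_partialDeriv hf, Finset.mul_sum]
  rw [Finset.sum_comm]
  simp only [mul_left_comm, mul_assoc]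

end PartialDeriv

/-! ### Polynomial functions -/

section Polynomials

open MvPolynomial

variable {ι : Type*}

/-- The function on Euclidean space given by a polynomial in the coordinates. -/
noncomputable def polyFun (ι : Type*) : MvPolynomial ι ℝ →ₐ[ℝ] (EuclideanSpace ℝ ι → ℝ) :=
  aeval fun i x => x i

/-- The space of polynomial functions of total degree `< j`. The strict inequality makes the
filtration start at `polyLT ι 0 = ⊥`. -/
noncomputable def polyLT (ι : Type*) (j : ℕ) : Submodule ℝ (EuclideanSpace ℝ ι → ℝ) :=
  (restrictSupport ℝ {d : ι →₀ ℕ | d.degree < j}).map (polyFun ι).toLinearMap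

theorem polyFun_apply (p : MvPolynomial ι ℝ) (x : EuclideanSpace ℝ ι) :
    polyFun ι p x = eval x p := by
  change Pi.evalAlgHom ℝ (fun _ => ℝ) x (aeval _ p) = _
  rw [comp_aeval_apply, aeval_eq_eval]
  rfl

theorem polyFun_injective : Function.Injective (polyFun ι) := fun p q h =>
  MvPolynomial.funext fun v => by
    simpa [polyFun_apply] using congrFun h (WithLp.toLp 2 v)

theorem polyLT_zero : polyLT ι 0 = ⊥ := by
  simp [polyLT, restrictSupport_eq_span]

theorem polyLT_mono : Monotone (polyLT ι) := fun _ _ h =>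
  Submodule.map_mono (restrictSupport_mono ℝ fun _ hd => lt_of_lt_of_le hd h)

theorem polyFun_mem_polyLT (p : MvPolynomial ι ℝ) : polyFun ι p ∈ polyLT ι (p.totalDegree + 1) :=
  Submodule.mem_map_of_mem ((mem_restrictSupport_iff ℝ).2 fun _ hd =>
    Nat.lt_succ_of_le (le_totalDegree hd))

theorem polyFun_monomial_mem_polyLT {d : ι →₀ ℕ} {j : ℕ} (hd : d.degree < j) (c : ℝ) :
    polyFun ι (monomial d c) ∈ polyLT ι j :=
  Submodule.mem_map_of_mem ((monomial_mem_restrictSupport ℝ).2 (Or.inl hd))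

theorem polyFun_mem_polyLT_of_isHomogeneous {p : MvPolynomial ι ℝ} {d : ℕ}
    (hp : p.IsHomogeneous d) : polyFun ι p ∈ polyLT ι (d + 1) := by
  refine Submodule.mem_map_of_mem ((mem_restrictSupport_iff ℝ).2 fun m hm => ?_)
  have hdeg : m.degree = d := not_imp_comm.1 hp.coeff_eq_zero (mem_support_iff.1 hm)
  exact Nat.lt_succ_of_le hdeg.le

instance finiteDimensional_polyLT [Finite ι] (j : ℕ) : FiniteDimensional ℝ (polyLT ι j) := by
  have hfin : {d : ι →₀ ℕ | d.degree < j}.Finite := Finsupp.finite_of_degree_lt j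
  rw [polyLT, restrictSupport_eq_span, Submodule.map_span]
  exact FiniteDimensional.span_of_finite ℝ ((hfin.image _).image _)

/-- Polynomials of degree less than `j`: the preimage of `polyLT ι j`. -/
noncomputable def mvPolyLT (ι : Type*) (j : ℕ) : Submodule ℝ (MvPolynomial ι ℝ) :=
  (polyLT ι j).comap (polyFun ι).toLinearMap

instance finiteDimensional_mvPolyLT [Finite ι] (j : ℕ) : FiniteDimensional ℝ (mvPolyLT ι j) :=
  .of_injective ((polyFun ι).toLinearMap.submoduleComap (polyLT ι j)) fun _ _ h =>
    Subtype.ext (polyFun_injective (congrArg Subtype.val h))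

theorem le_finrank_polyLT [Finite ι] [Nonempty ι] (j : ℕ) : j ≤ Module.finrank ℝ (polyLT ι j) := by
  obtain ⟨i⟩ := ‹Nonempty ι›
  have hpow : LinearIndependent ℝ fun d : Fin j => polyFun ι (monomial (Finsupp.single i d) 1) :=
    ((basisMonomials ι ℝ).linearIndependent.comp (fun d : Fin j => Finsupp.single i (d : ℕ))
      fun a b h => Fin.ext (Finsupp.single_injective i h)).map' (polyFun ι).toLinearMap
      (LinearMap.ker_eq_bot.2 polyFun_injective)
  have hmem (d : Fin j) : polyFun ι (monomial (Finsupp.single i d) 1) ∈ polyLT ι j :=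
    polyFun_monomial_mem_polyLT (by simp) 1
  have hsub : LinearIndependent ℝ fun d : Fin j => (⟨_, hmem d⟩ : polyLT ι j) :=
    .of_comp (polyLT ι j).subtype hpow
  simpa using hsub.fintype_card_le_finrank

theorem exists_finrank_polyLT_lt_and_le (ι : Type*) [Finite ι] [Nonempty ι] {k : ℕ} (hk : 1 ≤ k) :
    ∃ m, Module.finrank ℝ (polyLT ι m) < k ∧ k ≤ Module.finrank ℝ (polyLT ι (m + 1)) := by
  classical
  have hex : ∃ j, k ≤ Module.finrank ℝ (polyLT ι j) := ⟨k, le_finrank_polyLT k⟩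
  have hzero : ¬k ≤ Module.finrank ℝ (polyLT ι 0) := by
    rw [polyLT_zero, finrank_bot]
    omega
  obtain ⟨m, hm⟩ := Nat.exists_eq_succ_of_ne_zero ((Nat.find_pos hex).2 hzero).ne'
  have hspec := Nat.find_spec hex
  rw [hm] at hspec
  exact ⟨m, not_le.1 (Nat.find_min hex (hm ▸ m.lt_succ_self)), hspec⟩

variable [Fintype ι]

theorem inner_pow_mem_polyLT (t : EuclideanSpace ℝ ι) (d : ℕ) :
    (fun x => inner ℝ x t ^ d) ∈ polyLT ι (d + 1) := by
  have hhom : (∑ i, C (t i) * X i : MvPolynomial ι ℝ).IsHomogeneous 1 :=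
    .sum _ _ _ fun i _ => isHomogeneous_C_mul_X (t i) i
  convert polyFun_mem_polyLT_of_isHomogeneous (by simpa using hhom.pow d) using 1
  ext x
  simp [polyFun_apply, PiLp.inner_apply]

theorem contDiff_polyFun (p : MvPolynomial ι ℝ) {n : WithTop ℕ∞} : ContDiff ℝ n (polyFun ι p) := by
  induction p using MvPolynomial.induction_on with
  | C a =>
    rw [polyFun, aeval_C]
    exact contDiff_const
  | add p q hp hq =>
    rw [map_add]
    exact hp.add hq
  | mul_X p i hp =>
    rw [map_mul, polyFun, aeval_X, ← polyFun]
    exact hp.mul (EuclideanSpace.proj (𝕜 := ℝ) i).contDiff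

theorem contDiff_of_mem_polyLT {j : ℕ} {f : EuclideanSpace ℝ ι → ℝ} (hf : f ∈ polyLT ι j)
    {n : WithTop ℕ∞} : ContDiff ℝ n f := by
  obtain ⟨p, -, rfl⟩ := hf
  exact contDiff_polyFun p

theorem partialDeriv_polyFun (i : ι) (p : MvPolynomial ι ℝ) :
    partialDeriv i (polyFun ι p) = polyFun ι (pderiv i p) := by
  classical
  have hdiff (q : MvPolynomial ι ℝ) : Differentiable ℝ (polyFun ι q) :=
    (contDiff_polyFun q (n := 1)).differentiable one_ne_zero
  ext x
  induction p using MvPolynomial.induction_on with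
  | C a =>
    rw [pderiv_C, map_zero, polyFun, aeval_C]
    exact partialDeriv_const i a x
  | add p q hp hq =>
    rw [map_add, map_add, map_add, Pi.add_apply, ← hp, ← hq]
    exact partialDeriv_add i (hdiff p x) (hdiff q x)
  | mul_X p k hp =>
    have hX : partialDeriv i (polyFun ι (X k)) x = polyFun ι (pderiv i (X k)) x := by
      have hproj : polyFun ι (X k) = EuclideanSpace.proj (𝕜 := ℝ) k := by ext; simp [polyFun]
      rw [hproj, partialDeriv, ContinuousLinearMap.fderiv, pderiv_X, polyFun_apply]
      by_cases h : k = i <;> simp [h]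
    rw [map_mul]
    refine (partialDeriv_mul i (hdiff p x) (hdiff (X k) x)).trans ?_
    rw [hp, hX, Derivation.leibniz]
    simp [mul_comm, add_comm]

theorem partialDeriv_mem_polyLT {j : ℕ} {f : EuclideanSpace ℝ ι → ℝ}
    (hf : f ∈ polyLT ι (j + 1)) (i : ι) : partialDeriv i f ∈ polyLT ι j := by
  have hmonomial : restrictSupport ℝ {d : ι →₀ ℕ | d.degree < j + 1} ≤
      (restrictSupport ℝ {d : ι →₀ ℕ | d.degree < j}).comap (pderiv i).toLinearMap := by
    rw [restrictSupport_eq_span, Submodule.span_le]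
    rintro _ ⟨d, hd : d.degree < j + 1, rfl⟩
    rw [SetLike.mem_coe, Submodule.mem_comap, Derivation.coeFn_coe, pderiv_monomial,
      monomial_mem_restrictSupport]
    by_cases hdi : d i = 0
    · simp [hdi]
    · have hle : Finsupp.single i 1 ≤ d := by simpa [Nat.one_le_iff_ne_zero] using hdi
      have hdeg := congrArg Finsupp.degree (tsub_add_cancel_of_le hle)
      rw [map_add, Finsupp.degree_single] at hdeg
      exact Or.inl (show (d - Finsupp.single i 1).degree < j by omega)
  obtain ⟨p, hp, rfl⟩ := hf
  exact ⟨_, hmonomial hp, (partialDeriv_polyFun i p).symm⟩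

/-- By Euler's identity `x · ∇` multiplies a homogeneous polynomial by its degree. -/
theorem sum_mul_partialDeriv_sub_mem_polyLT {j : ℕ} {f : EuclideanSpace ℝ ι → ℝ}
    (hf : f ∈ polyLT ι (j + 1)) :
    (fun x => ∑ i, x i * partialDeriv i f x - j * f x) ∈ polyLT ι j := by
  let euler : MvPolynomial ι ℝ →ₗ[ℝ] MvPolynomial ι ℝ :=
    ∑ i, LinearMap.mulLeft ℝ (X i) ∘ₗ (pderiv i).toLinearMap - (j : ℝ) • LinearMap.id
  have hmonomial : restrictSupport ℝ {d : ι →₀ ℕ | d.degree < j + 1} ≤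
      (restrictSupport ℝ {d : ι →₀ ℕ | d.degree < j}).comap euler := by
    rw [restrictSupport_eq_span, Submodule.span_le]
    rintro _ ⟨d, hd : d.degree < j + 1, rfl⟩
    have heuler : euler (monomial d 1) = ((d.degree : ℝ) - j) • monomial d 1 := by
      simp only [euler, LinearMap.sub_apply, LinearMap.sum_apply, LinearMap.comp_apply,
        LinearMap.mulLeft_apply, Derivation.coeFn_coe, X_mul_pderiv_monomial, LinearMap.smul_apply,
        LinearMap.id_apply, ← Finset.sum_smul, ← Finsupp.degree_eq_sum, sub_smul,
        Nat.cast_smul_eq_nsmul]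
    rw [SetLike.mem_coe, Submodule.mem_comap, heuler]
    rcases (Nat.lt_succ_iff.1 hd).lt_or_eq with hlt | heq
    · exact Submodule.smul_mem _ _ ((monomial_mem_restrictSupport ℝ).2 (Or.inl hlt))
    · simp [heq]
  obtain ⟨p, hp, rfl⟩ := hf
  refine ⟨_, hmonomial hp, ?_⟩
  ext x
  simp [euler, partialDeriv_polyFun, polyFun_apply]

end Polynomials

/-! ### Locally Lipschitz functions -/

section LocallyLipschitz

variable {E : Type*} [NormedAddCommGroup E] {f : E → ℝ}

theorem eventuallyEq_of_eqOn_closedBall {g : E → ℝ} {r : ℝ}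
    (hfg : Set.EqOn f g (Metric.closedBall 0 r)) {x : E} (hx : ‖x‖ < r) : f =ᶠ[𝓝 x] g :=
  hfg.eventuallyEq_of_mem (Metric.closedBall_mem_nhds_of_mem (by simpa using hx))

variable [NormedSpace ℝ E] [FiniteDimensional ℝ E]

theorem exists_lipschitzWith_eqOn_closedBall (hf : LocallyLipschitz f) (r : ℝ) :
    ∃ K, ∃ g : E → ℝ, LipschitzWith K g ∧ Set.EqOn f g (Metric.closedBall 0 r) := by
  obtain ⟨K, hK⟩ := (hf.locallyLipschitzOn (s := Metric.closedBall (0 : E) r))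
    |>.exists_lipschitzOnWith_of_compact (isCompact_closedBall 0 r)
  obtain ⟨g, hg, hfg⟩ := hK.extend_real
  exact ⟨K, g, hg, hfg⟩

theorem ae_differentiableAt_of_locallyLipschitz [MeasurableSpace E] [BorelSpace E]
    (ν : Measure E) [ν.IsAddHaarMeasure] (hf : LocallyLipschitz f) :
    ∀ᵐ x ∂ν, DifferentiableAt ℝ f x := by
  have hball (N : ℕ) : ∀ᵐ x ∂ν, ‖x‖ < N → DifferentiableAt ℝ f x := by
    obtain ⟨K, g, hg, hfg⟩ := exists_lipschitzWith_eqOn_closedBall hf N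
    filter_upwards [hg.ae_differentiableAt] with x hx hxN
    exact (eventuallyEq_of_eqOn_closedBall hfg hxN).differentiableAt_iff.2 hx
  filter_upwards [ae_all_iff.2 hball] with x hx
  obtain ⟨N, hN⟩ := exists_nat_gt ‖x‖
  exact hx N hN

end LocallyLipschitz

/-! ### Integration by parts against `exp (-W)` -/

section IntegrationByParts

variable {ι : Type*} [Fintype ι] {W f G : EuclideanSpace ℝ ι → ℝ}

/-- The measure `exp (-W) dx`. -/
noncomputable def expNegMeasure (W : EuclideanSpace ℝ ι → ℝ) : Measure (EuclideanSpace ℝ ι) :=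
  volume.withDensity fun x => ENNReal.ofReal (Real.exp (-W x))

theorem integral_expNegMeasure (hW : Continuous W) (f : EuclideanSpace ℝ ι → ℝ) :
    ∫ x, f x ∂expNegMeasure W = ∫ x, f x * Real.exp (-W x) := by
  rw [expNegMeasure, integral_withDensity_eq_integral_toReal_smul (by fun_prop) (by simp)]
  simp [ENNReal.toReal_ofReal (Real.exp_pos _).le, mul_comm]

theorem integrable_expNegMeasure_iff (hW : Continuous W) :
    Integrable f (expNegMeasure W) ↔ Integrable fun x => f x * Real.exp (-W x) := by
  rw [expNegMeasure, integrable_withDensity_iff_integrable_smul' (by fun_prop) (by simp)]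
  simp [ENNReal.toReal_ofReal (Real.exp_pos _).le, mul_comm]

theorem ae_expNegMeasure_of_ae {p : EuclideanSpace ℝ ι → Prop} (h : ∀ᵐ x, p x) :
    ∀ᵐ x ∂expNegMeasure W, p x :=
  (withDensity_absolutelyContinuous _ _).ae_le h

theorem expNegMeasure_add_const (hW : Continuous W) (c : ℝ) :
    expNegMeasure (fun x => W x + c) = ENNReal.ofReal (Real.exp (-c)) • expNegMeasure W := by
  rw [expNegMeasure, expNegMeasure, ← withDensity_smul _ (by fun_prop)]
  congr 1
  ext x
  rw [Pi.smul_apply, smul_eq_mul, ← ENNReal.ofReal_mul (Real.exp_pos _).le, ← Real.exp_add,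
    neg_add_rev]

theorem isOpenPosMeasure_expNegMeasure (hW : Continuous W) :
    (expNegMeasure W).IsOpenPosMeasure :=
  (withDensity_absolutelyContinuous' (by fun_prop)
    (Eventually.of_forall fun x => by simp [Real.exp_pos])).isOpenPosMeasure

theorem integrable_exp_neg_of_isFiniteMeasure (hW : Continuous W)
    [IsFiniteMeasure (expNegMeasure W)] : Integrable fun x => Real.exp (-W x) := by
  simpa using (integrable_expNegMeasure_iff hW).1 (integrable_const (1 : ℝ))

theorem integrable_expNegMeasure_of_hasCompactSupport (hW : Continuous W) (hG : Continuous G)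
    (hc : HasCompactSupport G) : Integrable G (expNegMeasure W) :=
  (integrable_expNegMeasure_iff hW).2 <|
    (hG.mul (Real.continuous_exp.comp hW.neg)).integrable_of_hasCompactSupport hc.mul_right

theorem integrable_mul_of_hasCompactSupport {X : Type*} [TopologicalSpace X]
    [MeasurableSpace X] [OpensMeasurableSpace X] {ν : Measure X} {χ F : X → ℝ}
    (hχ : Continuous χ) (hc : HasCompactSupport χ) (hF : Integrable F ν) :
    Integrable (fun x => χ x * F x) ν := by
  obtain ⟨C, hC⟩ := hc.exists_bound_of_continuous hχ
  exact hF.bdd_mul hχ.aestronglyMeasurable (Eventually.of_forall hC)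

theorem measurable_partialDeriv (f : EuclideanSpace ℝ ι → ℝ) (i : ι) :
    Measurable (partialDeriv i f) :=
  measurable_fderiv_apply_const ℝ f _

theorem tsupport_partialDeriv_subset (i : ι) (f : EuclideanSpace ℝ ι → ℝ) :
    tsupport (partialDeriv i f) ⊆ tsupport f :=
  (closure_mono fun x (hx : partialDeriv i f x ≠ 0) (h : fderiv ℝ f x = 0) =>
    hx (by simp [partialDeriv, h])).trans (tsupport_fderiv_subset ℝ)

theorem hasCompactSupport_partialDeriv (hc : HasCompactSupport G) (i : ι) :
    HasCompactSupport (partialDeriv i G) :=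
  hc.mono' ((subset_tsupport _).trans (tsupport_partialDeriv_subset i G))

theorem integral_partialDeriv_mul_of_hasCompactSupport (hf : LocallyLipschitz f)
    (hG : ContDiff ℝ 1 G) (hc : HasCompactSupport G) (i : ι) :
    ∫ x, partialDeriv i f x * G x = -∫ x, f x * partialDeriv i G x := by
  obtain ⟨r, hr⟩ := hc.isCompact.isBounded.subset_ball (0 : EuclideanSpace ℝ ι)
  obtain ⟨K, g, hg, hfg⟩ := exists_lipschitzWith_eqOn_closedBall hf r
  have hfg_nhds {x} (hx : x ∈ tsupport G) : f =ᶠ[𝓝 x] g :=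
    eventuallyEq_of_eqOn_closedBall hfg (by simpa using hr hx)
  obtain ⟨D, hD⟩ := hG.lipschitzWith_of_hasCompactSupport hc one_ne_zero
  calc ∫ x, partialDeriv i f x * G x
      = ∫ x, lineDeriv ℝ g x (EuclideanSpace.basisFun ι ℝ i) * G x := by
        refine integral_congr_ae ?_
        filter_upwards [hg.ae_differentiableAt] with x hx
        by_cases hxG : x ∈ tsupport G
        · rw [hx.lineDeriv_eq_fderiv, partialDeriv, (hfg_nhds hxG).fderiv_eq]
        · simp [image_eq_zero_of_notMem_tsupport hxG]
    _ = ∫ x, lineDeriv ℝ G x (-EuclideanSpace.basisFun ι ℝ i) * g x :=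
        hg.integral_lineDeriv_mul_eq hD hc _
    _ = -∫ x, f x * partialDeriv i G x := by
        rw [← integral_neg]
        refine integral_congr_ae (Eventually.of_forall fun x => ?_)
        have hline : lineDeriv ℝ G x (-EuclideanSpace.basisFun ι ℝ i) = -partialDeriv i G x := by
          rw [(hG.differentiable one_ne_zero x).lineDeriv_eq_fderiv, map_neg, partialDeriv]
        simp only [hline]
        by_cases hxG : x ∈ tsupport G
        · rw [(hfg_nhds hxG).eq_of_nhds]
          ring
        · simp [image_eq_zero_of_notMem_tsupport (mt (tsupport_partialDeriv_subset i G ·) hxG)]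

theorem partialDeriv_exp_neg (hW : ContDiff ℝ 1 W) (i : ι) (x : EuclideanSpace ℝ ι) :
    partialDeriv i (fun y => Real.exp (-W y)) x = -(partialDeriv i W x * Real.exp (-W x)) := by
  have hderiv := (hW.differentiable one_ne_zero x).hasFDerivAt.fun_neg.exp.fderiv
  simp [partialDeriv, hderiv, mul_comm]

theorem integral_partialDeriv_mul_expNegMeasure_of_hasCompactSupport (hf : LocallyLipschitz f)
    (hG : ContDiff ℝ 1 G) (hc : HasCompactSupport G) (hW : ContDiff ℝ 1 W) (i : ι) :
    ∫ x, partialDeriv i f x * G x ∂expNegMeasure W =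
      ∫ x, f x * (G x * partialDeriv i W x - partialDeriv i G x) ∂expNegMeasure W := by
  have hexp : ContDiff ℝ 1 fun x => Real.exp (-W x) := hW.neg.exp
  have hibp := integral_partialDeriv_mul_of_hasCompactSupport hf (hG.mul hexp) hc.mul_right i
  simp only [integral_expNegMeasure hW.continuous, mul_assoc]
  rw [hibp, ← integral_neg]
  refine integral_congr_ae (Eventually.of_forall fun x => ?_)
  simp only [partialDeriv_mul i (hG.differentiable one_ne_zero x)
    (hexp.differentiable one_ne_zero x), partialDeriv_exp_neg hW]
  ring

/-- A fixed smooth bump function equal to `1` on the unit ball. -/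
noncomputable def unitBump (ι : Type*) : ContDiffBump (0 : EuclideanSpace ℝ ι) :=
  ⟨1, 2, by norm_num, by norm_num⟩

/-- Smooth cutoff functions exhausting Euclidean space, obtained by rescaling a bump function. -/
noncomputable def cutoff (R : ℕ) : EuclideanSpace ℝ ι → ℝ :=
  fun x => unitBump ι ((R + 1 : ℝ)⁻¹ • x)

theorem contDiff_cutoff (R : ℕ) {n : ℕ∞} : ContDiff ℝ n (cutoff (ι := ι) R) :=
  (unitBump ι).contDiff.comp (contDiff_const_smul _)

theorem hasCompactSupport_cutoff (R : ℕ) : HasCompactSupport (cutoff (ι := ι) R) :=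
  (unitBump ι).hasCompactSupport.comp_homeomorph
    (Homeomorph.smulOfNeZero (R + 1 : ℝ)⁻¹ (by positivity))

theorem cutoff_nonneg (R : ℕ) (x : EuclideanSpace ℝ ι) : 0 ≤ cutoff R x := (unitBump ι).nonneg

theorem cutoff_le_one (R : ℕ) (x : EuclideanSpace ℝ ι) : cutoff R x ≤ 1 := (unitBump ι).le_one

theorem tendsto_cutoff (x : EuclideanSpace ℝ ι) :
    Tendsto (fun R => cutoff R x) atTop (𝓝 1) := by
  refine tendsto_const_nhds.congr' ?_
  filter_upwards [eventually_ge_atTop ⌈‖x‖⌉₊] with R hR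
  refine ((unitBump ι).one_of_mem_closedBall ?_).symm
  rw [mem_closedBall_zero_iff, norm_smul, Real.norm_of_nonneg (by positivity),
    inv_mul_le_iff₀ (by positivity)]
  change ‖x‖ ≤ (R + 1) * 1
  linarith [Nat.ceil_le.1 hR]

theorem exists_abs_partialDeriv_cutoff_le (ι : Type*) [Fintype ι] :
    ∃ C, ∀ R (i : ι) x, |partialDeriv i (cutoff R) x| ≤ (R + 1 : ℝ)⁻¹ * C := by
  have hb : ContDiff ℝ 1 (unitBump ι) := (unitBump ι).contDiff
  obtain ⟨C, hC⟩ := ((unitBump ι).hasCompactSupport.fderiv (𝕜 := ℝ)).exists_bound_of_continuous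
    (hb.continuous_fderiv one_ne_zero)
  refine ⟨C, fun R i x => ?_⟩
  have hderiv : partialDeriv i (cutoff R) x =
      (R + 1 : ℝ)⁻¹ * partialDeriv i (unitBump ι) ((R + 1 : ℝ)⁻¹ • x) := by
    change fderiv ℝ (fun y => unitBump ι ((R + 1 : ℝ)⁻¹ • y)) x _ = _
    rw [fderiv_comp_smul, smul_apply, smul_eq_mul, partialDeriv]
  rw [hderiv, abs_mul, abs_of_nonneg (by positivity)]
  gcongr
  exact ((fderiv ℝ (unitBump ι) _).unit_le_opNorm _ (by simp)).trans (hC _)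

theorem tendsto_integral_cutoff_mul {ν : Measure (EuclideanSpace ℝ ι)}
    {F : EuclideanSpace ℝ ι → ℝ} (hF : Integrable F ν) :
    Tendsto (fun R => ∫ x, cutoff R x * F x ∂ν) atTop (𝓝 (∫ x, F x ∂ν)) := by
  refine tendsto_integral_of_dominated_convergence (fun x => ‖F x‖)
    (fun R => (contDiff_cutoff R (n := 0)).continuous.aestronglyMeasurable.mul hF.1) hF.norm
    (fun R => Eventually.of_forall fun x => ?_) (Eventually.of_forall fun x => ?_)
  · rw [norm_mul, Real.norm_of_nonneg (cutoff_nonneg R x)]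
    exact mul_le_of_le_one_left (norm_nonneg _) (cutoff_le_one R x)
  · simpa using (tendsto_cutoff x).mul_const (F x)

theorem tendsto_integral_partialDeriv_cutoff_mul {ν : Measure (EuclideanSpace ℝ ι)}
    {F : EuclideanSpace ℝ ι → ℝ} (hF : Integrable F ν) (i : ι) :
    Tendsto (fun R => ∫ x, partialDeriv i (cutoff R) x * F x ∂ν) atTop (𝓝 0) := by
  obtain ⟨C, hC⟩ := exists_abs_partialDeriv_cutoff_le ι
  refine squeeze_zero_norm (a := fun R : ℕ => (R + 1 : ℝ)⁻¹ * ∫ x, C * ‖F x‖ ∂ν)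
    (fun R => ?_) ?_
  · rw [← integral_const_mul]
    refine norm_integral_le_of_norm_le ((hF.norm.const_mul C).const_mul _)
      (Eventually.of_forall fun x => ?_)
    rw [norm_mul, ← mul_assoc]
    exact mul_le_mul_of_nonneg_right (hC R i x) (norm_nonneg _)
  · simpa using tendsto_one_div_add_atTop_nhds_zero_nat (𝕜 := ℝ) |>.mul_const (∫ x, C * ‖F x‖ ∂ν)

theorem integral_partialDeriv_mul_expNegMeasure (hf : LocallyLipschitz f) (hG : ContDiff ℝ 1 G)
    (hW : ContDiff ℝ 1 W) (i : ι) (hfG : Integrable (fun x => f x * G x) (expNegMeasure W))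
    (hdfG : Integrable (fun x => partialDeriv i f x * G x) (expNegMeasure W))
    (hfdG : Integrable (fun x => f x * (G x * partialDeriv i W x - partialDeriv i G x))
      (expNegMeasure W)) :
    ∫ x, partialDeriv i f x * G x ∂expNegMeasure W =
      ∫ x, f x * (G x * partialDeriv i W x - partialDeriv i G x) ∂expNegMeasure W := by
  have hcut (R : ℕ) : ∫ x, cutoff R x * (partialDeriv i f x * G x) ∂expNegMeasure W =
      (∫ x, cutoff R x * (f x * (G x * partialDeriv i W x - partialDeriv i G x))
        ∂expNegMeasure W) - ∫ x, partialDeriv i (cutoff R) x * (f x * G x) ∂expNegMeasure W := by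
    have hχ : ContDiff ℝ 1 (cutoff (ι := ι) R) := contDiff_cutoff R
    have hibp := integral_partialDeriv_mul_expNegMeasure_of_hasCompactSupport hf (hχ.mul hG)
      (hasCompactSupport_cutoff R).mul_right hW i
    calc ∫ x, cutoff R x * (partialDeriv i f x * G x) ∂expNegMeasure W
        = ∫ x, partialDeriv i f x * (cutoff R x * G x) ∂expNegMeasure W := by
          simp only [mul_left_comm]
      _ = ∫ x, (cutoff R x * (f x * (G x * partialDeriv i W x - partialDeriv i G x)) -
            partialDeriv i (cutoff R) x * (f x * G x)) ∂expNegMeasure W := by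
          rw [hibp]
          refine integral_congr_ae (Eventually.of_forall fun x => ?_)
          simp only [partialDeriv_mul i (hχ.differentiable one_ne_zero x)
            (hG.differentiable one_ne_zero x)]
          ring
      _ = _ := integral_sub
          (integrable_mul_of_hasCompactSupport hχ.continuous (hasCompactSupport_cutoff R) hfdG)
          (integrable_mul_of_hasCompactSupport
            (contDiff_partialDeriv hχ (zero_add 1).le i).continuous
            (hasCompactSupport_partialDeriv (hasCompactSupport_cutoff R) i) hfG)
  have hlim := (tendsto_integral_cutoff_mul hfdG).sub
    (tendsto_integral_partialDeriv_cutoff_mul hfG i)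
  simp only [← hcut, sub_zero] at hlim
  exact tendsto_nhds_unique (tendsto_integral_cutoff_mul hdfG) hlim

end IntegrationByParts

/-! ### Potentials with exponential decay -/

section Decay

theorem exists_one_add_pow_le_mul_exp {ε : ℝ} (hε : 0 < ε) (N : ℕ) :
    ∃ C, 0 ≤ C ∧ ∀ t, 0 ≤ t → (1 + t) ^ N ≤ C * Real.exp (ε * t) := by
  refine ⟨N.factorial / ε ^ N * Real.exp ε, by positivity, fun t ht => ?_⟩
  have hexp := Real.pow_div_factorial_le_exp (ε * (1 + t)) (by positivity) N
  rw [mul_pow, mul_add, mul_one, Real.exp_add, div_le_iff₀ (by positivity)] at hexp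
  rw [div_mul_eq_mul_div, div_mul_eq_mul_div, le_div_iff₀ (by positivity)]
  linarith

theorem integrable_one_add_norm_pow_mul_exp_neg {E : Type*} [NormedAddCommGroup E]
    [NormedSpace ℝ E] [FiniteDimensional ℝ E] [MeasurableSpace E] [BorelSpace E]
    (ν : Measure E) [ν.IsAddHaarMeasure] {ε : ℝ} (hε : 0 < ε) (N : ℕ) :
    Integrable (fun x : E => (1 + ‖x‖) ^ N * Real.exp (-(ε * ‖x‖))) ν := by
  set d := Module.finrank ℝ E + 1
  obtain ⟨C, -, hC⟩ := exists_one_add_pow_le_mul_exp hε (N + d)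
  have hbracket : Integrable (fun x : E => (1 + ‖x‖) ^ (-(d : ℝ))) ν :=
    integrable_one_add_norm (by exact_mod_cast Nat.lt_succ_self _)
  refine (hbracket.const_mul C).mono' (by fun_prop) (Eventually.of_forall fun x => ?_)
  have hpos : 0 < 1 + ‖x‖ := by positivity
  rw [Real.norm_of_nonneg (by positivity), Real.rpow_neg hpos.le, Real.rpow_natCast, Real.exp_neg,
    ← div_eq_mul_inv, ← div_eq_mul_inv, div_le_div_iff₀ (Real.exp_pos _) (by positivity), ← pow_add]
  exact hC _ (norm_nonneg x)

variable {ι : Type*} [Fintype ι] {W f g : EuclideanSpace ℝ ι → ℝ} {j : ℕ}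

theorem exists_abs_polyFun_le (p : MvPolynomial ι ℝ) :
    ∃ C N, 0 ≤ C ∧ ∀ x, |polyFun ι p x| ≤ C * (1 + ‖x‖) ^ N := by
  have hone (x : EuclideanSpace ℝ ι) : 1 ≤ 1 + ‖x‖ := by simp
  induction p using MvPolynomial.induction_on with
  | C a => exact ⟨|a|, 0, abs_nonneg a, fun x => by simp [polyFun_apply]⟩
  | add p q hp hq =>
    obtain ⟨C, N, hC, hp⟩ := hp
    obtain ⟨D, M, hD, hq⟩ := hq
    refine ⟨C + D, max N M, by positivity, fun x => ?_⟩
    calc |polyFun ι (p + q) x| ≤ C * (1 + ‖x‖) ^ N + D * (1 + ‖x‖) ^ M := by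
          rw [map_add, Pi.add_apply]
          exact (abs_add_le _ _).trans (add_le_add (hp x) (hq x))
      _ ≤ C * (1 + ‖x‖) ^ max N M + D * (1 + ‖x‖) ^ max N M := by
          gcongr
          exacts [hone x, le_max_left N M, hone x, le_max_right N M]
      _ = (C + D) * (1 + ‖x‖) ^ max N M := by ring
  | mul_X p i hp =>
    obtain ⟨C, N, hC, hp⟩ := hp
    refine ⟨C, N + 1, hC, fun x => ?_⟩
    have hcoord : |x i| ≤ 1 + ‖x‖ := (PiLp.norm_apply_le x i).trans (by simp)
    rw [map_mul, Pi.mul_apply, abs_mul, pow_succ, ← mul_assoc]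
    gcongr
    · exact hp x
    · simpa [polyFun_apply] using hcoord

/-- Exponential decay of `e^{-W}`, even after multiplication by `|∇W|²`. It puts every polynomial,
and its products with the partial derivatives of `W`, in `L²(e^{-W} dx)`. -/
def HasExpDecay (W : EuclideanSpace ℝ ι → ℝ) : Prop :=
  ∃ ε > 0, ∃ C, ∀ x, (1 + ‖fderiv ℝ W x‖) ^ 2 * Real.exp (-W x) ≤ C * Real.exp (-(ε * ‖x‖))

theorem memLp_of_abs_le_mul_one_add_norm_fderiv (hW : Continuous W) (hd : HasExpDecay W)
    (hf : f ∈ polyLT ι j) (hg : Continuous g)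
    (hfg : ∀ x, |g x| ≤ |f x| * (1 + ‖fderiv ℝ W x‖)) : MemLp g 2 (expNegMeasure W) := by
  obtain ⟨ε, hε, D, hD⟩ := hd
  obtain ⟨p, -, rfl⟩ := hf
  obtain ⟨C, N, -, hp⟩ := exists_abs_polyFun_le p
  rw [memLp_two_iff_integrable_sq hg.aestronglyMeasurable, integrable_expNegMeasure_iff hW]
  refine ((integrable_one_add_norm_pow_mul_exp_neg volume hε (2 * N)).const_mul (C ^ 2 * D)).mono'
    (by fun_prop) (Eventually.of_forall fun x => ?_)
  rw [Real.norm_of_nonneg (by positivity), ← sq_abs]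
  calc |g x| ^ 2 * Real.exp (-W x)
      ≤ (C * (1 + ‖x‖) ^ N * (1 + ‖fderiv ℝ W x‖)) ^ 2 * Real.exp (-W x) := by
        gcongr
        exact (hfg x).trans (by gcongr; exact hp x)
    _ = C ^ 2 * (1 + ‖x‖) ^ (2 * N) * ((1 + ‖fderiv ℝ W x‖) ^ 2 * Real.exp (-W x)) := by ring
    _ ≤ C ^ 2 * (1 + ‖x‖) ^ (2 * N) * (D * Real.exp (-(ε * ‖x‖))) :=
        mul_le_mul_of_nonneg_left (hD x) (by positivity)
    _ = C ^ 2 * D * ((1 + ‖x‖) ^ (2 * N) * Real.exp (-(ε * ‖x‖))) := by ring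

theorem memLp_of_mem_polyLT (hW : Continuous W) (hd : HasExpDecay W) (hf : f ∈ polyLT ι j) :
    MemLp f 2 (expNegMeasure W) :=
  memLp_of_abs_le_mul_one_add_norm_fderiv hW hd hf (contDiff_of_mem_polyLT hf (n := 0)).continuous
    fun _ => le_mul_of_one_le_right (abs_nonneg _) (by simp)

theorem memLp_mul_partialDeriv_of_mem_polyLT (hW : ContDiff ℝ 1 W) (hd : HasExpDecay W)
    (hf : f ∈ polyLT ι j) (i : ι) :
    MemLp (fun x => f x * partialDeriv i W x) 2 (expNegMeasure W) := by
  refine memLp_of_abs_le_mul_one_add_norm_fderiv hW.continuous hd hf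
    ((contDiff_of_mem_polyLT hf (n := 0)).continuous.mul
      (contDiff_partialDeriv hW (zero_add 1).le i).continuous) fun x => ?_
  have hpartial : |partialDeriv i W x| ≤ ‖fderiv ℝ W x‖ :=
    (fderiv ℝ W x).unit_le_opNorm _ (by simp)
  rw [abs_mul]
  gcongr
  linarith

end Decay

/-! ### The weighted Laplacian -/

section WeightedLaplacian

variable {ι : Type*} [Fintype ι] {W f q : EuclideanSpace ℝ ι → ℝ}

/-- The operator `L f = ⟨∇W, ∇f⟩ - Δf`, which represents the Dirichlet form of `e^{-W} dx`. -/
noncomputable def weightedLaplacian (W f : EuclideanSpace ℝ ι → ℝ) (x : EuclideanSpace ℝ ι) : ℝ :=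
  ∑ i, (partialDeriv i f x * partialDeriv i W x - partialDeriv i (partialDeriv i f) x)

theorem integral_carreDuChamp (hf : LocallyLipschitz f) (hq : ContDiff ℝ 2 q)
    (hW : ContDiff ℝ 1 W)
    (hfq : ∀ i, Integrable (fun x => f x * partialDeriv i q x) (expNegMeasure W))
    (hdfq : ∀ i, Integrable (fun x => partialDeriv i f x * partialDeriv i q x) (expNegMeasure W))
    (hfdq : ∀ i, Integrable (fun x => f x * (partialDeriv i q x * partialDeriv i W x -
      partialDeriv i (partialDeriv i q) x)) (expNegMeasure W)) :
    ∫ x, carreDuChamp f q x ∂expNegMeasure W =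
      ∫ x, f x * weightedLaplacian W q x ∂expNegMeasure W := by
  simp only [carreDuChamp, weightedLaplacian, Finset.mul_sum]
  rw [integral_finsetSum _ fun i _ => hdfq i, integral_finsetSum _ fun i _ => hfdq i]
  exact Finset.sum_congr rfl fun i _ => integral_partialDeriv_mul_expNegMeasure hf
    (contDiff_partialDeriv hq one_add_one_eq_two.le i) hW i (hfq i) (hdfq i) (hfdq i)

theorem integral_carreDuChamp_of_hasCompactSupport (hf : ContDiff ℝ 1 f)
    (hc : HasCompactSupport f) (hq : ContDiff ℝ 2 q) (hW : ContDiff ℝ 1 W) :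
    ∫ x, carreDuChamp f q x ∂expNegMeasure W =
      ∫ x, f x * weightedLaplacian W q x ∂expNegMeasure W := by
  have hdq (i : ι) : ContDiff ℝ 1 (partialDeriv i q) :=
    contDiff_partialDeriv hq one_add_one_eq_two.le i
  have hddq (i : ι) : Continuous (partialDeriv i (partialDeriv i q)) :=
    (contDiff_partialDeriv (hdq i) (zero_add 1).le i).continuous
  have hdW (i : ι) : Continuous (partialDeriv i W) :=
    (contDiff_partialDeriv hW (zero_add 1).le i).continuous
  refine integral_carreDuChamp hf.locallyLipschitz hq hW (fun i => ?_) (fun i => ?_) fun i => ?_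
  · exact integrable_expNegMeasure_of_hasCompactSupport hW.continuous
      (hf.continuous.mul (hdq i).continuous) hc.mul_right
  · exact integrable_expNegMeasure_of_hasCompactSupport hW.continuous
      ((contDiff_partialDeriv hf (zero_add 1).le i).continuous.mul (hdq i).continuous)
      (hasCompactSupport_partialDeriv hc i).mul_right
  · exact integrable_expNegMeasure_of_hasCompactSupport hW.continuous
      (hf.continuous.mul (((hdq i).continuous.mul (hdW i)).sub (hddq i))) hc.mul_right

theorem contDiff_weightedLaplacian (hf : ContDiff ℝ 3 f) (hW : ContDiff ℝ 2 W) :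
    ContDiff ℝ 1 (weightedLaplacian W f) := by
  refine ContDiff.sum fun i _ => ?_
  have hdf : ContDiff ℝ 2 (partialDeriv i f) := contDiff_partialDeriv hf two_add_one_eq_three.le i
  exact ((hdf.of_le one_le_two).mul (contDiff_partialDeriv hW one_add_one_eq_two.le i)).sub
    (contDiff_partialDeriv hdf one_add_one_eq_two.le i)

theorem partialDeriv_weightedLaplacian (hf : ContDiff ℝ 3 f) (hW : ContDiff ℝ 2 W) (j : ι)
    (x : EuclideanSpace ℝ ι) :
    partialDeriv j (weightedLaplacian W f) x = weightedLaplacian W (partialDeriv j f) x +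
      ∑ i, partialDeriv i f x * partialDeriv j (partialDeriv i W) x := by
  have hf₂ : ContDiff ℝ 2 f := hf.of_le (by norm_num)
  have hdf (i : ι) : ContDiff ℝ 2 (partialDeriv i f) :=
    contDiff_partialDeriv hf two_add_one_eq_three.le i
  have hdf_diff (i : ι) : DifferentiableAt ℝ (partialDeriv i f) x :=
    (hdf i).differentiable two_ne_zero x
  have hddf_diff (i : ι) : DifferentiableAt ℝ (partialDeriv i (partialDeriv i f)) x :=
    (contDiff_partialDeriv (hdf i) one_add_one_eq_two.le i).differentiable one_ne_zero x
  have hdW_diff (i : ι) : DifferentiableAt ℝ (partialDeriv i W) x :=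
    (contDiff_partialDeriv hW one_add_one_eq_two.le i).differentiable one_ne_zero x
  have hthird (i : ι) : partialDeriv j (partialDeriv i (partialDeriv i f)) x =
      partialDeriv i (partialDeriv i (partialDeriv j f)) x := by
    rw [partialDeriv_comm (hdf i) j i x, funext (partialDeriv_comm hf₂ j i)]
  unfold weightedLaplacian
  rw [partialDeriv_sum j _ fun i _ => ((hdf_diff i).fun_mul (hdW_diff i)).fun_sub (hddf_diff i),
    ← Finset.sum_add_distrib]
  refine Finset.sum_congr rfl fun i _ => ?_
  rw [partialDeriv_sub j ((hdf_diff i).fun_mul (hdW_diff i)) (hddf_diff i),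
    partialDeriv_mul j (hdf_diff i) (hdW_diff i), hthird i, partialDeriv_comm hf₂ j i x]
  ring

end WeightedLaplacian

/-! ### Semiconcave functions -/

section Convexity

variable {E : Type*} [NormedAddCommGroup E] [NormedSpace ℝ E] {g : E → ℝ}

theorem convexOn_comp_line (hg : ConvexOn ℝ Set.univ g) (x v : E) :
    ConvexOn ℝ Set.univ fun t : ℝ => g (x + t • v) := by
  simpa [Function.comp_def, AffineMap.lineMap_apply, add_comm] using
    hg.comp_affineMap (AffineMap.lineMap x (x + v))

theorem add_fderiv_apply_le_of_convexOn (hg : ConvexOn ℝ Set.univ g) {x : E}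
    (hd : DifferentiableAt ℝ g x) (v : E) : g x + fderiv ℝ g x v ≤ g (x + v) := by
  have hslope := (convexOn_comp_line hg x v).le_slope_of_hasDerivAt (x := 0) (y := 1)
    (Set.mem_univ _) (Set.mem_univ _) one_pos (hd.hasFDerivAt.hasLineDerivAt v)
  simp only [slope_def_field, one_smul, zero_smul, add_zero, sub_zero, div_one] at hslope
  linarith

theorem fderiv_fderiv_apply_nonneg_of_convexOn (hg : ConvexOn ℝ Set.univ g)
    (hg₂ : ContDiff ℝ 2 g) (x v : E) : 0 ≤ fderiv ℝ (fderiv ℝ g) x v v := by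
  have hline (t : ℝ) : HasDerivAt (fun t : ℝ => x + t • v) v t := by
    simpa using ((hasDerivAt_id t).smul_const v).const_add x
  have hderiv (t : ℝ) :
      HasDerivAt (fun t : ℝ => g (x + t • v)) (fderiv ℝ g (x + t • v) v) t :=
    (hg₂.differentiable two_ne_zero _).hasFDerivAt.comp_hasDerivAt t (hline t)
  have hmono : Monotone fun t : ℝ => fderiv ℝ g (x + t • v) v := by
    rw [← monotoneOn_univ, ← funext fun t => (hderiv t).deriv]
    exact (convexOn_comp_line hg x v).monotoneOn_deriv fun t _ => (hderiv t).differentiableAt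
  have hsecond : HasLineDerivAt ℝ (fun y => fderiv ℝ g y v) (fderiv ℝ (fderiv ℝ g) x v v) x v := by
    have hd : DifferentiableAt ℝ (fderiv ℝ g) x :=
      (hg₂.fderiv_right one_add_one_eq_two.le).differentiable one_ne_zero x
    simpa using (hd.hasFDerivAt.clm_apply (hasFDerivAt_const v x)).hasLineDerivAt v
  rw [← HasDerivAt.deriv hsecond]
  exact hmono.deriv_nonneg

end Convexity

section Semiconcave

variable {E : Type*} [NormedAddCommGroup E] [InnerProductSpace ℝ E] {W : E → ℝ} {ρ : ℝ}

theorem apply_add_le_of_convexOn_sub (hconv : ConvexOn ℝ Set.univ fun x => ρ / 2 * ‖x‖ ^ 2 - W x)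
    {x : E} (hW : DifferentiableAt ℝ W x) (v : E) :
    W (x + v) ≤ W x + fderiv ℝ W x v + ρ / 2 * ‖v‖ ^ 2 := by
  have hsq : HasFDerivAt (fun y : E => ρ / 2 * ‖y‖ ^ 2) ((ρ / 2) • 2 • innerSL ℝ x) x :=
    (hasStrictFDerivAt_norm_sq x).hasFDerivAt.const_mul _
  have hle := add_fderiv_apply_le_of_convexOn hconv (hsq.differentiableAt.fun_sub hW) v
  rw [(hsq.fun_sub hW.hasFDerivAt).fderiv, norm_add_sq_real] at hle
  simp only [sub_apply, smul_apply, coe_innerSL_apply, nsmul_eq_mul, Nat.cast_ofNat,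
    smul_eq_mul] at hle
  linarith

theorem fderiv_fderiv_apply_le_of_convexOn_sub
    (hconv : ConvexOn ℝ Set.univ fun x => ρ / 2 * ‖x‖ ^ 2 - W x) (hW : ContDiff ℝ 2 W) (x v : E) :
    fderiv ℝ (fderiv ℝ W) x v v ≤ ρ * ‖v‖ ^ 2 := by
  have hnonneg := fderiv_fderiv_apply_nonneg_of_convexOn hconv
    ((contDiff_const.mul (contDiff_norm_sq ℝ)).sub hW) x v
  have hfirst : fderiv ℝ (fun x => ρ / 2 * ‖x‖ ^ 2 - W x) =
      fun y => (ρ • innerSL ℝ : E →L[ℝ] E →L[ℝ] ℝ) y - fderiv ℝ W y := by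
    ext y v
    rw [((hasStrictFDerivAt_norm_sq y).hasFDerivAt.const_mul (ρ / 2) |>.fun_sub
      (hW.differentiable two_ne_zero y).hasFDerivAt).fderiv]
    simp only [sub_apply, smul_apply, coe_innerSL_apply, nsmul_eq_mul, Nat.cast_ofNat, smul_eq_mul]
    ring
  have hd : DifferentiableAt ℝ (fderiv ℝ W) x :=
    (hW.fderiv_right one_add_one_eq_two.le).differentiable one_ne_zero x
  rw [hfirst, fderiv_fun_sub (ContinuousLinearMap.differentiableAt _) hd,
    ContinuousLinearMap.fderiv] at hnonneg
  have hquad : fderiv ℝ (fderiv ℝ W) x v v ≤ ρ * inner ℝ v v := sub_nonneg.1 hnonneg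
  rwa [real_inner_self_eq_norm_sq] at hquad

end Semiconcave

/-! ### The Bochner inequality and the Rayleigh quotient of polynomials -/

section Bochner

variable {ι : Type*} [Fintype ι] {W f : EuclideanSpace ℝ ι → ℝ} {ρ : ℝ} {j : ℕ}

theorem continuous_carreDuChamp {g : EuclideanSpace ℝ ι → ℝ} (hf : ContDiff ℝ 1 f)
    (hg : ContDiff ℝ 1 g) : Continuous (carreDuChamp f g) :=
  continuous_finsetSum _ fun i _ => (contDiff_partialDeriv hf (zero_add 1).le i).continuous.mul
    (contDiff_partialDeriv hg (zero_add 1).le i).continuous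

theorem integrable_carreDuChamp {ν : Measure (EuclideanSpace ℝ ι)} {g : EuclideanSpace ℝ ι → ℝ}
    (hf : ∀ i, MemLp (partialDeriv i f) 2 ν) (hg : ∀ i, MemLp (partialDeriv i g) 2 ν) :
    Integrable (carreDuChamp f g) ν :=
  integrable_finsetSum _ fun i _ => (hf i).integrable_mul (hg i)

theorem carreDuChamp_weightedLaplacian_le (hf : ContDiff ℝ 3 f) (hW : ContDiff ℝ 2 W)
    (hconv : ConvexOn ℝ Set.univ fun x => ρ / 2 * ‖x‖ ^ 2 - W x) (x : EuclideanSpace ℝ ι) :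
    carreDuChamp (weightedLaplacian W f) f x ≤
      ∑ i, partialDeriv i f x * weightedLaplacian W (partialDeriv i f) x +
        ρ * carreDuChamp f f x := by
  have hhess := fderiv_fderiv_apply_le_of_convexOn_sub hconv hW x
    (WithLp.toLp 2 fun i => partialDeriv i f x)
  rw [fderiv_fderiv_apply_eq_sum hW, EuclideanSpace.real_norm_sq_eq] at hhess
  calc carreDuChamp (weightedLaplacian W f) f x
      = ∑ i, partialDeriv i f x * weightedLaplacian W (partialDeriv i f) x + ∑ i, ∑ j,
          partialDeriv i f x * partialDeriv j f x * partialDeriv i (partialDeriv j W) x := by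
        rw [carreDuChamp, ← Finset.sum_add_distrib]
        refine Finset.sum_congr rfl fun i _ => ?_
        rw [partialDeriv_weightedLaplacian hf hW i x, add_mul, mul_comm, Finset.sum_mul]
        refine congrArg _ (Finset.sum_congr rfl fun j _ => ?_)
        ring
    _ ≤ _ := by
        gcongr
        simpa only [carreDuChamp, pow_two] using hhess

theorem integral_cutoff_mul_sq_weightedLaplacian (hf : ContDiff ℝ 3 f) (hW : ContDiff ℝ 2 W)
    (R : ℕ) :
    ∫ x, cutoff R x * weightedLaplacian W f x ^ 2 ∂expNegMeasure W =
      ∫ x, (cutoff R x * carreDuChamp (weightedLaplacian W f) f x +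
        ∑ i, partialDeriv i (cutoff R) x * (weightedLaplacian W f x * partialDeriv i f x))
          ∂expNegMeasure W := by
  have hχ : ContDiff ℝ 1 (cutoff (ι := ι) R) := contDiff_cutoff R
  have hu := contDiff_weightedLaplacian hf hW
  have hgreen := integral_carreDuChamp_of_hasCompactSupport (hχ.mul hu)
    (hasCompactSupport_cutoff R).mul_right (hf.of_le (by norm_num)) (hW.of_le one_le_two)
  simp only [pow_two, ← mul_assoc]
  rw [← hgreen]
  refine integral_congr_ae (Eventually.of_forall fun x => ?_)
  simp only [carreDuChamp, Finset.mul_sum, ← Finset.sum_add_distrib]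
  refine Finset.sum_congr rfl fun i _ => ?_
  rw [partialDeriv_mul i (hχ.differentiable one_ne_zero x) (hu.differentiable one_ne_zero x)]
  ring

theorem integral_cutoff_mul_sq_weightedLaplacian_le (hf : ContDiff ℝ 3 f) (hW : ContDiff ℝ 2 W)
    {K : EuclideanSpace ℝ ι → ℝ} (hK : Integrable K (expNegMeasure W))
    (hΓK : ∀ x, carreDuChamp (weightedLaplacian W f) f x ≤ K x) (R : ℕ) :
    ∫ x, cutoff R x * weightedLaplacian W f x ^ 2 ∂expNegMeasure W ≤
      ∫ x, cutoff R x * K x ∂expNegMeasure W +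
        ∑ i, ∫ x, partialDeriv i (cutoff R) x * (weightedLaplacian W f x * partialDeriv i f x)
          ∂expNegMeasure W := by
  have hχ : ContDiff ℝ 1 (cutoff (ι := ι) R) := contDiff_cutoff R
  have hχc := hasCompactSupport_cutoff (ι := ι) R
  have hf₁ : ContDiff ℝ 1 f := hf.of_le (by norm_num)
  have hu := contDiff_weightedLaplacian hf hW
  have hχΓ : Integrable (fun x => cutoff R x * carreDuChamp (weightedLaplacian W f) f x)
      (expNegMeasure W) := integrable_expNegMeasure_of_hasCompactSupport hW.continuous
    (hχ.continuous.mul (continuous_carreDuChamp hu hf₁)) hχc.mul_right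
  have hχK := integrable_mul_of_hasCompactSupport hχ.continuous hχc hK
  have herror : ∀ i ∈ Finset.univ, Integrable (fun x => partialDeriv i (cutoff R) x *
      (weightedLaplacian W f x * partialDeriv i f x)) (expNegMeasure W) := fun i _ =>
    integrable_expNegMeasure_of_hasCompactSupport hW.continuous
      ((contDiff_partialDeriv hχ (zero_add 1).le i).continuous.mul
        (hu.continuous.mul (contDiff_partialDeriv hf₁ (zero_add 1).le i).continuous))
      (hasCompactSupport_partialDeriv hχc i).mul_right
  have herror_sum := integrable_finsetSum _ herror
  rw [integral_cutoff_mul_sq_weightedLaplacian hf hW R, ← integral_finsetSum _ herror,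
    ← integral_add hχK herror_sum]
  refine integral_mono (hχΓ.add herror_sum) (hχK.add herror_sum) fun x => ?_
  gcongr
  · exact cutoff_nonneg R x
  · exact hΓK x

theorem integral_sq_weightedLaplacian_le_integral (hf : ContDiff ℝ 3 f) (hW : ContDiff ℝ 2 W)
    (hdf : ∀ i, MemLp (partialDeriv i f) 2 (expNegMeasure W))
    (hLf : MemLp (weightedLaplacian W f) 2 (expNegMeasure W))
    {K : EuclideanSpace ℝ ι → ℝ} (hK : Integrable K (expNegMeasure W))
    (hΓK : ∀ x, carreDuChamp (weightedLaplacian W f) f x ≤ K x) :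
    ∫ x, weightedLaplacian W f x ^ 2 ∂expNegMeasure W ≤ ∫ x, K x ∂expNegMeasure W := by
  have hlim := (tendsto_integral_cutoff_mul hK).add (tendsto_finsetSum Finset.univ fun i _ =>
    tendsto_integral_partialDeriv_cutoff_mul (hLf.integrable_mul (hdf i)) i)
  simp only [Finset.sum_const_zero, add_zero] at hlim
  exact le_of_tendsto_of_tendsto' (tendsto_integral_cutoff_mul hLf.integrable_sq) hlim
    (integral_cutoff_mul_sq_weightedLaplacian_le hf hW hK hΓK)

theorem integral_sq_weightedLaplacian_le (hf : ContDiff ℝ 3 f) (hW : ContDiff ℝ 2 W)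
    (hconv : ConvexOn ℝ Set.univ fun x => ρ / 2 * ‖x‖ ^ 2 - W x)
    (hdf : ∀ i, MemLp (partialDeriv i f) 2 (expNegMeasure W))
    (hLf : MemLp (weightedLaplacian W f) 2 (expNegMeasure W))
    (hLdf : ∀ i, MemLp (weightedLaplacian W (partialDeriv i f)) 2 (expNegMeasure W)) :
    ∫ x, weightedLaplacian W f x ^ 2 ∂expNegMeasure W ≤
      ∑ i, ∫ x, partialDeriv i f x * weightedLaplacian W (partialDeriv i f) x ∂expNegMeasure W +
        ρ * ∫ x, carreDuChamp f f x ∂expNegMeasure W := by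
  have hsum : ∀ i ∈ Finset.univ, Integrable (fun x => partialDeriv i f x *
      weightedLaplacian W (partialDeriv i f) x) (expNegMeasure W) :=
    fun i _ => (hdf i).integrable_mul (hLdf i)
  have hΓ := (integrable_carreDuChamp hdf hdf).const_mul ρ
  rw [← integral_finsetSum _ hsum, ← integral_const_mul,
    ← integral_add (integrable_finsetSum _ hsum) hΓ]
  exact integral_sq_weightedLaplacian_le_integral hf hW hdf hLf
    ((integrable_finsetSum _ hsum).add hΓ) (carreDuChamp_weightedLaplacian_le hf hW hconv)

theorem memLp_weightedLaplacian_term (hW : ContDiff ℝ 1 W) (hd : HasExpDecay W)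
    (hf : f ∈ polyLT ι j) (i : ι) :
    MemLp (fun x => partialDeriv i f x * partialDeriv i W x -
      partialDeriv i (partialDeriv i f) x) 2 (expNegMeasure W) := by
  have hdf := partialDeriv_mem_polyLT (polyLT_mono j.le_succ hf) i
  exact (memLp_mul_partialDeriv_of_mem_polyLT hW hd hdf i).sub (memLp_of_mem_polyLT hW.continuous hd
    (partialDeriv_mem_polyLT (polyLT_mono j.le_succ hdf) i))

theorem memLp_partialDeriv_of_mem_polyLT (hW : Continuous W) (hd : HasExpDecay W)
    (hf : f ∈ polyLT ι j) (i : ι) : MemLp (partialDeriv i f) 2 (expNegMeasure W) :=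
  memLp_of_mem_polyLT hW hd (partialDeriv_mem_polyLT (polyLT_mono j.le_succ hf) i)

theorem memLp_weightedLaplacian_of_mem_polyLT (hW : ContDiff ℝ 1 W) (hd : HasExpDecay W)
    (hf : f ∈ polyLT ι j) : MemLp (weightedLaplacian W f) 2 (expNegMeasure W) :=
  memLp_finsetSum _ fun i _ => memLp_weightedLaplacian_term hW hd hf i

theorem integral_carreDuChamp_of_mem_polyLT {g : EuclideanSpace ℝ ι → ℝ} (hg : LocallyLipschitz g)
    (hgL : MemLp g 2 (expNegMeasure W)) (hdg : ∀ i, MemLp (partialDeriv i g) 2 (expNegMeasure W))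
    (hW : ContDiff ℝ 1 W) (hd : HasExpDecay W) (hf : f ∈ polyLT ι j) :
    ∫ x, carreDuChamp g f x ∂expNegMeasure W =
      ∫ x, g x * weightedLaplacian W f x ∂expNegMeasure W :=
  have hdf := memLp_partialDeriv_of_mem_polyLT hW.continuous hd hf
  integral_carreDuChamp hg (contDiff_of_mem_polyLT hf) hW (fun i => hgL.integrable_mul (hdf i))
    (fun i => (hdg i).integrable_mul (hdf i))
    fun i => hgL.integrable_mul (memLp_weightedLaplacian_term hW hd hf i)

theorem integral_sq_weightedLaplacian_le_of_mem_polyLT (hW : ContDiff ℝ 2 W) (hd : HasExpDecay W)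
    (hconv : ConvexOn ℝ Set.univ fun x => ρ / 2 * ‖x‖ ^ 2 - W x) (hf : f ∈ polyLT ι j) :
    ∫ x, weightedLaplacian W f x ^ 2 ∂expNegMeasure W ≤
      ∑ i, ∫ x, carreDuChamp (partialDeriv i f) (partialDeriv i f) x ∂expNegMeasure W +
        ρ * ∫ x, carreDuChamp f f x ∂expNegMeasure W := by
  have hW₁ : ContDiff ℝ 1 W := hW.of_le one_le_two
  have hdf (i : ι) := partialDeriv_mem_polyLT (polyLT_mono j.le_succ hf) i
  have hdfL := memLp_partialDeriv_of_mem_polyLT hW.continuous hd hf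
  refine (integral_sq_weightedLaplacian_le (contDiff_of_mem_polyLT hf) hW hconv hdfL
    (memLp_weightedLaplacian_of_mem_polyLT hW₁ hd hf)
    fun i => memLp_weightedLaplacian_of_mem_polyLT hW₁ hd (hdf i)).trans_eq ?_
  congr 1
  exact Finset.sum_congr rfl fun i _ => (integral_carreDuChamp_of_mem_polyLT
    (contDiff_of_mem_polyLT (hdf i) (n := 1)).locallyLipschitz (hdfL i)
    (memLp_partialDeriv_of_mem_polyLT hW.continuous hd (hdf i)) hW₁ hd (hdf i)).symm

theorem integral_mul_le_of_integral_sq_le {Ω : Type*} [MeasurableSpace Ω] {ν : Measure Ω}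
    {f u : Ω → ℝ} (hf : MemLp f 2 ν) (hu : MemLp u 2 ν) {c : ℝ} (hc : 0 < c)
    (h : ∫ x, u x ^ 2 ∂ν ≤ c * ∫ x, f x * u x ∂ν) :
    ∫ x, f x * u x ∂ν ≤ c * ∫ x, f x ^ 2 ∂ν := by
  have hff := hf.integrable_sq.const_mul (c ^ 2)
  have hfu : Integrable (fun x => 2 * c * (f x * u x)) ν := (hf.integrable_mul hu).const_mul _
  have hdiff : Integrable (fun x => c ^ 2 * f x ^ 2 - 2 * c * (f x * u x)) ν := hff.sub hfu
  have hsq : 0 ≤ c ^ 2 * ∫ x, f x ^ 2 ∂ν - 2 * c * ∫ x, f x * u x ∂ν + ∫ x, u x ^ 2 ∂ν := by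
    rw [← integral_const_mul, ← integral_const_mul, ← integral_sub hff hfu,
      ← integral_add hdiff hu.integrable_sq]
    refine integral_nonneg fun x => ?_
    calc 0 ≤ (c * f x - u x) ^ 2 := sq_nonneg _
      _ = c ^ 2 * f x ^ 2 - 2 * c * (f x * u x) + u x ^ 2 := by ring
  exact le_of_mul_le_mul_left (by linarith) hc

theorem integral_carreDuChamp_le_of_mem_polyLT (hW : ContDiff ℝ 2 W) (hd : HasExpDecay W)
    (hρ : 0 < ρ) (hconv : ConvexOn ℝ Set.univ fun x => ρ / 2 * ‖x‖ ^ 2 - W x)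
    (hf : f ∈ polyLT ι (j + 1)) :
    ∫ x, carreDuChamp f f x ∂expNegMeasure W ≤ ρ * j * ∫ x, f x ^ 2 ∂expNegMeasure W := by
  have hW₁ : ContDiff ℝ 1 W := hW.of_le one_le_two
  induction j generalizing f with
  | zero =>
    have hdf (i : ι) : partialDeriv i f = 0 := by
      simpa [polyLT_zero] using partialDeriv_mem_polyLT hf i
    simp [carreDuChamp, hdf]
  | succ j ih =>
    have hfL := memLp_of_mem_polyLT hW.continuous hd hf
    have hdfL := memLp_partialDeriv_of_mem_polyLT hW.continuous hd hf
    have hgreen := integral_carreDuChamp_of_mem_polyLT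
      (contDiff_of_mem_polyLT hf (n := 1)).locallyLipschitz hfL hdfL hW₁ hd hf
    have hderiv : ∑ i, ∫ x, carreDuChamp (partialDeriv i f) (partialDeriv i f) x ∂expNegMeasure W ≤
        ρ * j * ∫ x, carreDuChamp f f x ∂expNegMeasure W := by
      have hsum : ∫ x, carreDuChamp f f x ∂expNegMeasure W =
          ∑ i, ∫ x, partialDeriv i f x * partialDeriv i f x ∂expNegMeasure W :=
        integral_finsetSum _ fun i _ => (hdfL i).integrable_mul (hdfL i)
      rw [hsum, Finset.mul_sum]
      refine Finset.sum_le_sum fun i _ => ?_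
      simpa only [pow_two] using ih (partialDeriv_mem_polyLT hf i)
    have hbochner := integral_sq_weightedLaplacian_le_of_mem_polyLT hW hd hconv hf
    rw [hgreen]
    refine integral_mul_le_of_integral_sq_le hfL (memLp_weightedLaplacian_of_mem_polyLT hW₁ hd hf)
      (by positivity) ?_
    rw [← hgreen]
    push_cast
    linarith

end Bochner

/-! ### The local Lipschitz constant of a differentiable function -/

section LocalLip

variable {E : Type*} [NormedAddCommGroup E] [NormedSpace ℝ E] {f : E → ℝ} {x : E}

theorem eventually_abs_sub_div_dist_le (hf : DifferentiableAt ℝ f x) {ε : ℝ} (hε : 0 < ε) :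
    ∀ᶠ y in 𝓝[≠] x, |f y - f x| / dist y x ≤ ‖fderiv ℝ f x‖ + ε := by
  filter_upwards [nhdsWithin_le_nhds (hf.hasFDerivAt.isLittleO.bound hε), self_mem_nhdsWithin]
    with y hy hyx
  rw [div_le_iff₀ (dist_pos.2 hyx), dist_eq_norm, add_mul]
  calc |f y - f x|
      = ‖fderiv ℝ f x (y - x) + (f y - f x - fderiv ℝ f x (y - x))‖ := by
        rw [add_sub_cancel, Real.norm_eq_abs]
    _ ≤ _ := norm_add_le_of_le ((fderiv ℝ f x).le_opNorm _) hy

theorem norm_fderiv_le_of_eventually_abs_sub_div_dist_le [Nontrivial E] {a : ℝ}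
    (ha : ∀ᶠ y in 𝓝[≠] x, |f y - f x| / dist y x ≤ a) : ‖fderiv ℝ f x‖ ≤ a := by
  obtain ⟨z, hz⟩ := ha.exists
  refine norm_fderiv_le_of_lip' ℝ (le_trans (by positivity) hz) ?_
  filter_upwards [eventually_nhdsWithin_iff.1 ha] with y hy
  rcases eq_or_ne y x with rfl | hyx
  · simp
  · have hquot := hy hyx
    rwa [div_le_iff₀ (dist_pos.2 hyx), dist_eq_norm] at hquot

theorem localLip_eq_norm_fderiv [Nontrivial E] (hf : DifferentiableAt ℝ f x) :
    localLip f x = ‖fderiv ℝ f x‖ := by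
  rw [localLip, limsup_eq]
  refine le_antisymm (le_of_forall_pos_le_add fun ε hε => ?_) (le_csInf
    ⟨_, eventually_abs_sub_div_dist_le hf one_pos⟩ fun a => ?_)
  · exact csInf_le ⟨_, fun a => norm_fderiv_le_of_eventually_abs_sub_div_dist_le⟩
      (eventually_abs_sub_div_dist_le hf hε)
  · exact norm_fderiv_le_of_eventually_abs_sub_div_dist_le

end LocalLip

/-! ### The perturbed potential -/

section JapaneseBracket

variable {E : Type*} [NormedAddCommGroup E]

/-- The Japanese bracket `√(1 + |x|²)`: a smooth convex substitute for the norm. -/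
noncomputable def japaneseBracket (x : E) : ℝ := √(1 + ‖x‖ ^ 2)

theorem japaneseBracket_sq (x : E) : japaneseBracket x ^ 2 = 1 + ‖x‖ ^ 2 :=
  Real.sq_sqrt (by positivity)

theorem one_le_japaneseBracket (x : E) : 1 ≤ japaneseBracket x := Real.one_le_sqrt.2 (by simp)

theorem norm_le_japaneseBracket (x : E) : ‖x‖ ≤ japaneseBracket x :=
  Real.le_sqrt_of_sq_le (by linarith)

theorem japaneseBracket_eq_norm (x : E) : japaneseBracket x = ‖WithLp.toLp 2 ((1 : ℝ), x)‖ := by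
  simp [japaneseBracket, WithLp.prod_norm_eq_of_L2]

theorem lipschitzWith_japaneseBracket : LipschitzWith 1 (japaneseBracket (E := E)) := by
  refine LipschitzWith.of_dist_le_mul fun x y => ?_
  rw [NNReal.coe_one, one_mul, Real.dist_eq, japaneseBracket_eq_norm, japaneseBracket_eq_norm]
  refine (abs_norm_sub_norm_le _ _).trans_eq ?_
  simp [← WithLp.toLp_sub, dist_eq_norm]

theorem convexOn_japaneseBracket [NormedSpace ℝ E] :
    ConvexOn ℝ Set.univ (japaneseBracket (E := E)) := by
  refine ⟨convex_univ, fun x _ y _ a b ha hb hab => ?_⟩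
  have hmap : WithLp.toLp 2 ((1 : ℝ), a • x + b • y) =
      a • WithLp.toLp 2 ((1 : ℝ), x) + b • WithLp.toLp 2 ((1 : ℝ), y) := by
    simp [← WithLp.toLp_smul, ← WithLp.toLp_add, hab]
  simp only [japaneseBracket_eq_norm, hmap]
  exact convexOn_univ_norm.2 trivial trivial ha hb hab

theorem contDiff_japaneseBracket [InnerProductSpace ℝ E] {n : WithTop ℕ∞} :
    ContDiff ℝ n (japaneseBracket (E := E)) :=
  (contDiff_const.add (contDiff_norm_sq ℝ)).sqrt fun x => by positivity

theorem convexOn_sub_add_japaneseBracket [NormedSpace ℝ E] {V : E → ℝ} {ρ ε : ℝ} (hε : 0 ≤ ε)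
    (hconv : ConvexOn ℝ Set.univ fun x => ρ / 2 * ‖x‖ ^ 2 - V x) :
    ConvexOn ℝ Set.univ
      fun x => (ρ + 2 * ε) / 2 * ‖x‖ ^ 2 - (V x + 2 * ε * japaneseBracket x) := by
  have hsub : ConvexOn ℝ Set.univ fun x : E => japaneseBracket x + -1 :=
    convexOn_japaneseBracket.add_const (-1)
  have hsq := hsub.pow (fun x _ => by linarith [one_le_japaneseBracket x]) 2
  refine ((hconv.add (hsq.smul hε)).add_const (-2 * ε)).congr fun x _ => ?_
  have hbracket := japaneseBracket_sq x
  simp only [Pi.add_apply, Pi.pow_apply, smul_eq_mul]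
  linear_combination ε * hbracket

end JapaneseBracket

section Perturbation

theorem exists_norm_le_one_apply_eq_norm {E : Type*} [NormedAddCommGroup E]
    [InnerProductSpace ℝ E] [CompleteSpace E] (T : E →L[ℝ] ℝ) : ∃ v, ‖v‖ ≤ 1 ∧ T v = ‖T‖ := by
  set w := (InnerProductSpace.toDual ℝ E).symm T
  have hw : ‖w‖ = ‖T‖ := by simp [w]
  refine ⟨‖w‖⁻¹ • w, ?_, ?_⟩
  · rw [norm_smul, norm_inv, norm_norm]
    exact inv_mul_le_one
  · have hTw : T w = ‖w‖ * ‖w‖ := by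
      rw [← real_inner_self_eq_norm_mul_norm, InnerProductSpace.toDual_symm_apply]
    rw [map_smul, hTw, smul_eq_mul, hw, ← mul_assoc]
    exact inv_mul_mul_self _

theorem exists_forall_mem_closedBall_apply_le {E : Type*} [NormedAddCommGroup E]
    [InnerProductSpace ℝ E] [CompleteSpace E] {V : E → ℝ} {ρ : ℝ} (hρ : 0 ≤ ρ)
    (hconv : ConvexOn ℝ Set.univ fun x => ρ / 2 * ‖x‖ ^ 2 - V x) {x : E}
    (hV : DifferentiableAt ℝ V x) :
    ∃ z, ∀ y ∈ Metric.closedBall z (1 / 4), V y ≤ V x - ‖fderiv ℝ V x‖ / 4 + ρ / 2 := by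
  obtain ⟨v, hv, hTv⟩ := exists_norm_le_one_apply_eq_norm (fderiv ℝ V x)
  refine ⟨x - (1 / 2 : ℝ) • v, fun y hy => ?_⟩
  rw [mem_closedBall_iff_norm] at hy
  set w := y - (x - (1 / 2 : ℝ) • v)
  have hyx : y = x + (w - (1 / 2 : ℝ) • v) := by simp only [w]; module
  have hslope : fderiv ℝ V x (w - (1 / 2 : ℝ) • v) ≤ -‖fderiv ℝ V x‖ / 4 := by
    have hw := (le_abs_self _).trans ((fderiv ℝ V x).le_of_opNorm_le_of_le le_rfl hy)
    rw [map_sub, map_smul, hTv, smul_eq_mul]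
    linarith
  have hnorm : ‖w - (1 / 2 : ℝ) • v‖ ≤ 1 := by
    refine (norm_sub_le _ _).trans ?_
    rw [norm_smul, Real.norm_of_nonneg (by norm_num)]
    linarith
  have hsq : ρ / 2 * ‖w - (1 / 2 : ℝ) • v‖ ^ 2 ≤ ρ / 2 :=
    mul_le_of_le_one_right (by positivity) (pow_le_one₀ (norm_nonneg _) hnorm)
  rw [hyx]
  linarith [apply_add_le_of_convexOn_sub hconv hV (w - (1 / 2 : ℝ) • v)]

variable {ι : Type*} [Fintype ι] {V : EuclideanSpace ℝ ι → ℝ} {ρ ε : ℝ}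

theorem exists_exp_norm_fderiv_mul_exp_neg_le (hρ : 0 ≤ ρ)
    (hconv : ConvexOn ℝ Set.univ fun x => ρ / 2 * ‖x‖ ^ 2 - V x) (hV : Differentiable ℝ V)
    (hint : Integrable fun x => Real.exp (-V x)) :
    ∃ C, ∀ x, Real.exp (‖fderiv ℝ V x‖ / 4) * Real.exp (-V x) ≤ C := by
  set c := volume.real (Metric.closedBall (0 : EuclideanSpace ℝ ι) (1 / 4))
  have hc : 0 < c :=
    ENNReal.toReal_pos (Metric.measure_closedBall_pos _ _ (by norm_num)).ne'
      measure_closedBall_lt_top.ne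
  refine ⟨Real.exp (ρ / 2) * ((∫ x, Real.exp (-V x)) / c), fun x => ?_⟩
  obtain ⟨z, hz⟩ := exists_forall_mem_closedBall_apply_le hρ hconv (hV x)
  have hball : c * Real.exp (‖fderiv ℝ V x‖ / 4 - V x - ρ / 2) ≤ ∫ x, Real.exp (-V x) := by
    calc c * Real.exp (‖fderiv ℝ V x‖ / 4 - V x - ρ / 2)
        = ∫ y in Metric.closedBall z (1 / 4), Real.exp (‖fderiv ℝ V x‖ / 4 - V x - ρ / 2) := by
          rw [setIntegral_const, smul_eq_mul, Measure.real, Measure.addHaar_closedBall_center]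
          rfl
      _ ≤ ∫ y in Metric.closedBall z (1 / 4), Real.exp (-V y) :=
          setIntegral_mono_on (integrableOn_const measure_closedBall_lt_top.ne) hint.integrableOn
            measurableSet_closedBall fun y hy => Real.exp_le_exp.2 (by linarith [hz y hy])
      _ ≤ ∫ x, Real.exp (-V x) :=
          setIntegral_le_integral hint (Eventually.of_forall fun x => (Real.exp_pos _).le)
  calc Real.exp (‖fderiv ℝ V x‖ / 4) * Real.exp (-V x)
      = Real.exp (ρ / 2) * Real.exp (‖fderiv ℝ V x‖ / 4 - V x - ρ / 2) := by
        rw [← Real.exp_add, ← Real.exp_add]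
        ring_nf
    _ ≤ Real.exp (ρ / 2) * ((∫ x, Real.exp (-V x)) / c) := by
        gcongr
        rwa [le_div_iff₀' hc]

theorem norm_fderiv_add_japaneseBracket_le (hε : 0 ≤ ε) {x : EuclideanSpace ℝ ι}
    (hV : DifferentiableAt ℝ V x) :
    ‖fderiv ℝ (fun x => V x + 2 * ε * japaneseBracket x) x‖ ≤ ‖fderiv ℝ V x‖ + 2 * ε := by
  have hs : DifferentiableAt ℝ (japaneseBracket (E := EuclideanSpace ℝ ι)) x :=
    (contDiff_japaneseBracket (n := 1)).differentiable one_ne_zero x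
  rw [(hV.hasFDerivAt.fun_add (hs.hasFDerivAt.const_mul (2 * ε))).fderiv]
  refine norm_add_le_of_le le_rfl ?_
  rw [norm_smul, Real.norm_of_nonneg (by positivity)]
  exact mul_le_of_le_one_right (by positivity)
    (norm_fderiv_le_of_lipschitz ℝ lipschitzWith_japaneseBracket)

theorem hasExpDecay_add_japaneseBracket (hρ : 0 ≤ ρ) (hε : 0 < ε)
    (hconv : ConvexOn ℝ Set.univ fun x => ρ / 2 * ‖x‖ ^ 2 - V x) (hV : Differentiable ℝ V)
    (hint : Integrable fun x => Real.exp (-V x)) :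
    HasExpDecay fun x => V x + 2 * ε * japaneseBracket x := by
  obtain ⟨C, hC⟩ := exists_exp_norm_fderiv_mul_exp_neg_le hρ hconv hV hint
  refine ⟨2 * ε, by positivity, (8 + 2 * ε) ^ 2 * C, fun x => ?_⟩
  have hgrad : 1 + ‖fderiv ℝ (fun x => V x + 2 * ε * japaneseBracket x) x‖ ≤
      (8 + 2 * ε) * Real.exp (‖fderiv ℝ V x‖ / 8) := by
    have hexp := Real.add_one_le_exp (‖fderiv ℝ V x‖ / 8)
    nlinarith [norm_fderiv_add_japaneseBracket_le hε.le (hV x), norm_nonneg (fderiv ℝ V x)]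
  have hsq : Real.exp (‖fderiv ℝ V x‖ / 8) ^ 2 = Real.exp (‖fderiv ℝ V x‖ / 4) := by
    rw [← Real.exp_nat_mul]
    ring_nf
  calc (1 + ‖fderiv ℝ (fun x => V x + 2 * ε * japaneseBracket x) x‖) ^ 2 *
        Real.exp (-(V x + 2 * ε * japaneseBracket x))
      ≤ ((8 + 2 * ε) * Real.exp (‖fderiv ℝ V x‖ / 8)) ^ 2 *
        (Real.exp (-V x) * Real.exp (-(2 * ε * ‖x‖))) := by
        rw [neg_add, Real.exp_add]
        gcongr
        exact norm_le_japaneseBracket x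
    _ = (8 + 2 * ε) ^ 2 * (Real.exp (‖fderiv ℝ V x‖ / 4) * Real.exp (-V x)) *
        Real.exp (-(2 * ε * ‖x‖)) := by
        rw [mul_pow, hsq]
        ring
    _ ≤ (8 + 2 * ε) ^ 2 * C * Real.exp (-(2 * ε * ‖x‖)) := by
        gcongr
        exact hC x

end Perturbation

/-! ### The variational principle -/

section MinMax

variable {Ω : Type*} [PseudoMetricSpace Ω] [MeasurableSpace Ω] {μ : Measure Ω} {f : Ω → ℝ}
  {k : ℕ} {a : ℝ}

theorem memW12Lip_of_integrable (hf : LocallyLipschitz f) (hf₂ : Integrable (fun x => f x ^ 2) μ)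
    (hdf : Integrable (fun x => localLip f x ^ 2) μ) : memW12Lip μ f :=
  ⟨hf, ENNReal.add_lt_top.2 ⟨hf₂.lintegral_lt_top, hdf.lintegral_lt_top⟩⟩

theorem exists_submodule_le_finrank_eq {K M : Type*} [DivisionRing K] [AddCommGroup M] [Module K M]
    {G : Submodule K M} (hk : k ≤ Module.finrank K G) :
    ∃ F ≤ G, Module.finrank K F = k := by
  obtain ⟨b, hb⟩ := exists_linearIndependent_of_le_finrank hk
  refine ⟨Submodule.span K (Set.range fun i => (b i : M)),
    Submodule.span_le.2 (Set.range_subset_iff.2 fun i => (b i).2), ?_⟩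
  exact (finrank_span_eq_card (hb.map' G.subtype G.ker_subtype)).trans (Fintype.card_fin k)

theorem lambdaLip_le {G : Submodule ℝ (Ω → ℝ)} (hk : k ≤ Module.finrank ℝ G) (ha : 0 ≤ a)
    (hG : ∀ g ∈ G, memW12Lip μ g)
    (hle : ∀ g ∈ G, ∫ x, localLip g x ^ 2 ∂μ ≤ a * ∫ x, g x ^ 2 ∂μ) : lambdaLip μ k ≤ a := by
  obtain ⟨F, hFG, hF⟩ := exists_submodule_le_finrank_eq hk
  refine csInf_le_of_le ⟨0, ?_⟩ ⟨F, hF, fun f hf => hG f (hFG hf), rfl⟩ (Real.sSup_le ?_ ha)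
  · rintro _ ⟨F, -, -, rfl⟩
    refine Real.sSup_nonneg ?_
    rintro _ ⟨f, -, -, rfl⟩
    positivity
  · rintro _ ⟨f, hf, hf₀, rfl⟩
    have hpos : 0 < ∫ x, f x ^ 2 ∂μ := hf₀.symm.lt_of_le (by positivity)
    exact (div_le_iff₀ hpos).2 (hle f (hFG hf))

theorem le_lambdaLip
    (hex : ∃ F : Submodule ℝ (Ω → ℝ), Module.finrank ℝ F = k ∧ ∀ f ∈ F, memW12Lip μ f)
    (hbdd : ∀ F : Submodule ℝ (Ω → ℝ), Module.finrank ℝ F = k → (∀ f ∈ F, memW12Lip μ f) →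
      ∃ C, ∀ f ∈ F, ∫ x, localLip f x ^ 2 ∂μ ≤ C * ∫ x, f x ^ 2 ∂μ)
    (hle : ∀ F : Submodule ℝ (Ω → ℝ), Module.finrank ℝ F = k → (∀ f ∈ F, memW12Lip μ f) →
      ∃ f ∈ F, ∫ x, f x ^ 2 ∂μ ≠ 0 ∧ a * ∫ x, f x ^ 2 ∂μ ≤ ∫ x, localLip f x ^ 2 ∂μ) :
    a ≤ lambdaLip μ k := by
  obtain ⟨F₀, hF₀, hW₀⟩ := hex
  refine le_csInf ⟨_, F₀, hF₀, hW₀, rfl⟩ ?_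
  rintro _ ⟨F, hF, hW, rfl⟩
  obtain ⟨C, hC⟩ := hbdd F hF hW
  obtain ⟨f, hf, hf₀, hfa⟩ := hle F hF hW
  have hpos {g : Ω → ℝ} (hg : ∫ x, g x ^ 2 ∂μ ≠ 0) : 0 < ∫ x, g x ^ 2 ∂μ :=
    hg.symm.lt_of_le (by positivity)
  refine le_csSup_of_le ⟨C, ?_⟩ ⟨f, hf, hf₀, rfl⟩ ((le_div_iff₀ (hpos hf₀)).2 hfa)
  rintro _ ⟨g, hg, hg₀, rfl⟩
  exact (div_le_iff₀ (hpos hg₀)).2 (hC g hg)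

end MinMax

/-! ### The upper bound -/

section Upper

theorem norm_fderiv_mul_exp_neg_sq_le {E : Type*} [NormedAddCommGroup E] [NormedSpace ℝ E]
    {f s : E → ℝ} {x : E} {ε : ℝ} (hε : 0 ≤ ε) (hf : DifferentiableAt ℝ f x)
    (hs : DifferentiableAt ℝ s x) (hs₁ : ‖fderiv ℝ s x‖ ≤ 1) :
    ‖fderiv ℝ (fun y => f y * Real.exp (-(ε * s y))) x‖ ^ 2 ≤
      ((1 + ε) * ‖fderiv ℝ f x‖ ^ 2 + (ε ^ 2 + ε) * f x ^ 2) * Real.exp (-(ε * s x)) ^ 2 := by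
  have hexp := (hs.hasFDerivAt.const_mul ε).fun_neg.exp
  have hnorm : ‖fderiv ℝ (fun y => f y * Real.exp (-(ε * s y))) x‖ ≤
      (‖fderiv ℝ f x‖ + ε * |f x|) * Real.exp (-(ε * s x)) := by
    rw [(hf.hasFDerivAt.fun_mul hexp).fderiv]
    refine (norm_add_le _ _).trans ?_
    simp only [norm_smul, norm_neg, Real.norm_eq_abs, Real.abs_exp, abs_of_nonneg hε]
    have hfs := mul_le_mul_of_nonneg_left hs₁
      (show 0 ≤ |f x| * Real.exp (-(ε * s x)) * ε by positivity)
    linarith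
  refine (pow_le_pow_left₀ (norm_nonneg _) hnorm 2).trans ?_
  rw [mul_pow]
  gcongr
  rw [← sq_abs (f x)]
  nlinarith [mul_le_mul_of_nonneg_left (two_mul_le_add_sq ‖fderiv ℝ f x‖ |f x|) hε]

variable {ι : Type*} [Fintype ι] {V f : EuclideanSpace ℝ ι → ℝ} {ρ ε : ℝ} {m k : ℕ}

theorem integrable_mul_exp_neg_sq_iff {s h : EuclideanSpace ℝ ι → ℝ} (hV : Continuous V)
    (hs : Continuous s) : Integrable (fun x => h x * Real.exp (-(ε * s x)) ^ 2) (expNegMeasure V) ↔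
      Integrable h (expNegMeasure fun x => V x + 2 * ε * s x) := by
  rw [integrable_expNegMeasure_iff hV, integrable_expNegMeasure_iff (by fun_prop)]
  refine integrable_congr (Eventually.of_forall fun x => ?_)
  simp only [mul_assoc, ← Real.exp_nat_mul, ← Real.exp_add]
  ring_nf

theorem integral_mul_exp_neg_sq {s : EuclideanSpace ℝ ι → ℝ} (hV : Continuous V)
    (hs : Continuous s) (h : EuclideanSpace ℝ ι → ℝ) :
    ∫ x, h x * Real.exp (-(ε * s x)) ^ 2 ∂expNegMeasure V =
      ∫ x, h x ∂expNegMeasure fun x => V x + 2 * ε * s x := by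
  rw [integral_expNegMeasure hV, integral_expNegMeasure (by fun_prop)]
  refine integral_congr_ae (Eventually.of_forall fun x => ?_)
  simp only [mul_assoc, ← Real.exp_nat_mul, ← Real.exp_add]
  ring_nf

/-- Multiplication by `e^{-ε√(1 + |x|²)}`. It is an isometry from `L²(e^{-V - 2ε√(1 + |x|²)} dx)`
to `L²(e^{-V} dx)`, and supplies the test functions when `e^{-V} dx` lacks moments. -/
noncomputable def expDamp (ε : ℝ) : (EuclideanSpace ℝ ι → ℝ) →ₗ[ℝ] EuclideanSpace ℝ ι → ℝ :=
  LinearMap.mulRight ℝ fun x => Real.exp (-(ε * japaneseBracket x))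

theorem expDamp_injective (ε : ℝ) : Function.Injective (expDamp (ι := ι) ε) := fun _ _ hfg =>
  funext fun x => mul_right_cancel₀ (Real.exp_ne_zero _) (congrFun hfg x)

theorem expDamp_sq (ε : ℝ) (f : EuclideanSpace ℝ ι → ℝ) (x : EuclideanSpace ℝ ι) :
    expDamp ε f x ^ 2 = f x ^ 2 * Real.exp (-(ε * japaneseBracket x)) ^ 2 :=
  mul_pow _ _ 2

theorem contDiff_expDamp {n : WithTop ℕ∞} (hf : ContDiff ℝ n f) : ContDiff ℝ n (expDamp ε f) :=
  hf.mul (contDiff_const.mul contDiff_japaneseBracket).neg.exp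

theorem localLip_expDamp_sq_le [Nonempty ι] (hε : 0 ≤ ε) (hf : Differentiable ℝ f)
    (x : EuclideanSpace ℝ ι) :
    localLip (expDamp ε f) x ^ 2 ≤ ((1 + ε) * carreDuChamp f f x + (ε ^ 2 + ε) * f x ^ 2) *
      Real.exp (-(ε * japaneseBracket x)) ^ 2 := by
  have hs : DifferentiableAt ℝ (japaneseBracket (E := EuclideanSpace ℝ ι)) x :=
    (contDiff_japaneseBracket (n := 1)).differentiable one_ne_zero x
  have hdamp : DifferentiableAt ℝ (expDamp ε f) x := (hf x).mul (hs.const_mul ε).neg.exp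
  rw [localLip_eq_norm_fderiv hdamp, ← norm_fderiv_sq]
  exact norm_fderiv_mul_exp_neg_sq_le hε (hf x) hs
    (norm_fderiv_le_of_lipschitz ℝ lipschitzWith_japaneseBracket)

theorem integrable_localLip_expDamp_sq [Nonempty ι] (hε : 0 ≤ ε) (hV : Continuous V)
    (hf : ContDiff ℝ 1 f)
    (hΓ : Integrable (fun x => (1 + ε) * carreDuChamp f f x + (ε ^ 2 + ε) * f x ^ 2)
      (expNegMeasure fun x => V x + 2 * ε * japaneseBracket x)) :
    Integrable (fun x => localLip (expDamp ε f) x ^ 2) (expNegMeasure V) := by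
  have hdamp : ContDiff ℝ 1 (expDamp ε f) := contDiff_expDamp hf
  have hloc (x : EuclideanSpace ℝ ι) :
      localLip (expDamp ε f) x = ‖fderiv ℝ (expDamp ε f) x‖ :=
    localLip_eq_norm_fderiv (hdamp.differentiable one_ne_zero x)
  refine ((integrable_mul_exp_neg_sq_iff hV lipschitzWith_japaneseBracket.continuous).2 hΓ).mono' ?_
    (Eventually.of_forall fun x => ?_)
  · simp only [hloc]
    exact ((hdamp.continuous_fderiv one_ne_zero).norm.pow 2).aestronglyMeasurable
  · rw [Real.norm_of_nonneg (sq_nonneg _)]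
    exact localLip_expDamp_sq_le hε (hf.differentiable one_ne_zero) x

theorem integral_localLip_expDamp_sq_le [Nonempty ι] (hε : 0 ≤ ε) (hV : Continuous V)
    (hf : ContDiff ℝ 1 f)
    (hΓ : Integrable (fun x => (1 + ε) * carreDuChamp f f x + (ε ^ 2 + ε) * f x ^ 2)
      (expNegMeasure fun x => V x + 2 * ε * japaneseBracket x)) :
    ∫ x, localLip (expDamp ε f) x ^ 2 ∂expNegMeasure V ≤
      ∫ x, ((1 + ε) * carreDuChamp f f x + (ε ^ 2 + ε) * f x ^ 2)
        ∂expNegMeasure fun x => V x + 2 * ε * japaneseBracket x := by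
  have hs := (lipschitzWith_japaneseBracket (E := EuclideanSpace ℝ ι)).continuous
  rw [← integral_mul_exp_neg_sq hV hs]
  exact integral_mono (integrable_localLip_expDamp_sq hε hV hf hΓ)
    ((integrable_mul_exp_neg_sq_iff hV hs).2 hΓ)
    (localLip_expDamp_sq_le hε (hf.differentiable one_ne_zero))

theorem memW12Lip_expDamp_and_integral_localLip_sq_le [Nonempty ι] (hρ : 0 < ρ) (hε : 0 < ε)
    (hV : ContDiff ℝ 2 V) (hconv : ConvexOn ℝ Set.univ fun x => ρ / 2 * ‖x‖ ^ 2 - V x)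
    (hint : Integrable fun x => Real.exp (-V x)) (hf : f ∈ polyLT ι (m + 1)) :
    memW12Lip (expNegMeasure V) (expDamp ε f) ∧
      ∫ x, localLip (expDamp ε f) x ^ 2 ∂expNegMeasure V ≤
        ((1 + ε) * ((ρ + 2 * ε) * m) + (ε ^ 2 + ε)) *
          ∫ x, expDamp ε f x ^ 2 ∂expNegMeasure V := by
  have hs := (lipschitzWith_japaneseBracket (E := EuclideanSpace ℝ ι)).continuous
  have hW : ContDiff ℝ 2 fun x => V x + 2 * ε * japaneseBracket x :=
    hV.add (contDiff_const.mul contDiff_japaneseBracket)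
  have hd := hasExpDecay_add_japaneseBracket hρ.le hε hconv (hV.differentiable two_ne_zero) hint
  have hf₁ : ContDiff ℝ 1 f := contDiff_of_mem_polyLT hf
  have hf₂ := (memLp_of_mem_polyLT hW.continuous hd hf).integrable_sq
  have hdf := memLp_partialDeriv_of_mem_polyLT hW.continuous hd hf
  have hΓ := integrable_carreDuChamp hdf hdf
  have hsum : Integrable (fun x => (1 + ε) * carreDuChamp f f x + (ε ^ 2 + ε) * f x ^ 2) _ :=
    (hΓ.const_mul (1 + ε)).add (hf₂.const_mul (ε ^ 2 + ε))
  refine ⟨memW12Lip_of_integrable (contDiff_expDamp hf₁).locallyLipschitz ?_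
    (integrable_localLip_expDamp_sq hε.le hV.continuous hf₁ hsum), ?_⟩
  · simpa only [expDamp_sq] using (integrable_mul_exp_neg_sq_iff hV.continuous hs).2 hf₂
  · refine (integral_localLip_expDamp_sq_le hε.le hV.continuous hf₁ hsum).trans ?_
    simp only [expDamp_sq]
    rw [integral_mul_exp_neg_sq hV.continuous hs,
      integral_add (hΓ.const_mul _) (hf₂.const_mul _), integral_const_mul, integral_const_mul]
    have hpoly := integral_carreDuChamp_le_of_mem_polyLT hW hd (by positivity)
      (convexOn_sub_add_japaneseBracket hε.le hconv) hf
    linarith [mul_le_mul_of_nonneg_left hpoly (by positivity : 0 ≤ 1 + ε)]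

theorem lambdaLip_expNegMeasure_le [Nonempty ι] (hρ : 0 < ρ) (hV : ContDiff ℝ 2 V)
    (hconv : ConvexOn ℝ Set.univ fun x => ρ / 2 * ‖x‖ ^ 2 - V x)
    (hint : Integrable fun x => Real.exp (-V x)) (hk : k ≤ Module.finrank ℝ (polyLT ι (m + 1))) :
    lambdaLip (expNegMeasure V) k ≤ ρ * m := by
  have hdim (ε : ℝ) : k ≤ Module.finrank ℝ ((polyLT ι (m + 1)).map (expDamp ε)) :=
    hk.trans_eq (Submodule.equivMapOfInjective _ (expDamp_injective ε) _).finrank_eq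
  have hle : ∀ᶠ ε in 𝓝[>] (0 : ℝ), lambdaLip (expNegMeasure V) k ≤
      (1 + ε) * ((ρ + 2 * ε) * m) + (ε ^ 2 + ε) := by
    filter_upwards [self_mem_nhdsWithin] with ε hε
    have hε : 0 < ε := hε
    refine lambdaLip_le (hdim ε) (by positivity) ?_ ?_
    · rintro _ ⟨f, hf, rfl⟩
      exact (memW12Lip_expDamp_and_integral_localLip_sq_le hρ hε hV hconv hint hf).1
    · rintro _ ⟨f, hf, rfl⟩
      exact (memW12Lip_expDamp_and_integral_localLip_sq_le hρ hε hV hconv hint hf).2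
  have hcont : Continuous fun ε : ℝ => (1 + ε) * ((ρ + 2 * ε) * m) + (ε ^ 2 + ε) := by fun_prop
  have hlim := (hcont.tendsto 0).mono_left (nhdsWithin_le_nhds (s := Set.Ioi 0))
  simp only [mul_zero, add_zero, one_mul, ne_eq, OfNat.ofNat_ne_zero, not_false_eq_true,
    zero_pow] at hlim
  exact ge_of_tendsto hlim hle

end Upper

/-! ### Completeness of polynomials -/

section Completeness

theorem ae_eq_zero_of_integral_mul_exp_inner_eq_zero {E : Type*} [NormedAddCommGroup E]
    [InnerProductSpace ℝ E] [CompleteSpace E] [SecondCountableTopology E] [MeasurableSpace E]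
    [BorelSpace E] {ν : Measure E} {h : E → ℝ} (hm : Measurable h) (hi : Integrable h ν)
    (hfourier : ∀ t : E, ∫ x, (h x : ℂ) * Complex.exp (inner ℝ x t * Complex.I) ∂ν = 0) :
    h =ᵐ[ν] 0 := by
  have hpos_fin := isFiniteMeasure_withDensity hi.lintegral_lt_top.ne
  have hneg_fin := isFiniteMeasure_withDensity hi.neg.lintegral_lt_top.ne
  have hpart {g : E → ℝ} (hgm : Measurable g) (hg : Integrable g ν) (t : E) : Integrable
      (fun x => (ENNReal.ofReal (g x)).toReal • Complex.exp (inner ℝ x t * Complex.I)) ν := by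
    refine hg.abs.mono' (by fun_prop) (Eventually.of_forall fun x => ?_)
    rw [norm_smul, Complex.norm_exp_ofReal_mul_I, mul_one, ENNReal.toReal_ofReal',
      Real.norm_of_nonneg (le_max_right _ _)]
    exact max_le (le_abs_self _) (abs_nonneg _)
  have heq : (ν.withDensity fun x => ENNReal.ofReal (h x)) =
      ν.withDensity fun x => ENNReal.ofReal ((-h) x) := by
    refine Measure.ext_of_charFun (funext fun t => ?_)
    rw [charFun_apply, charFun_apply,
      integral_withDensity_eq_integral_toReal_smul (by fun_prop) (by simp),
      integral_withDensity_eq_integral_toReal_smul (by fun_prop) (by simp), ← sub_eq_zero,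
      ← integral_sub (hpart hm hi t) (hpart hm.neg hi.neg t), ← hfourier t]
    refine integral_congr_ae (Eventually.of_forall fun x => ?_)
    simp only [← sub_smul, ENNReal.toReal_ofReal', Pi.neg_apply, max_zero_sub_max_neg_zero_eq_self]
    exact Complex.real_smul
  rw [withDensity_eq_iff (by fun_prop) (by fun_prop) hi.lintegral_lt_top.ne] at heq
  filter_upwards [heq] with x hx
  have hparts := congrArg ENNReal.toReal hx
  rw [ENNReal.toReal_ofReal', ENNReal.toReal_ofReal', Pi.neg_apply] at hparts
  rw [Pi.zero_apply, ← max_zero_sub_max_neg_zero_eq_self (h x), hparts, sub_self]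

theorem integral_mul_exp_inner_eq_zero {E : Type*} [NormedAddCommGroup E] [InnerProductSpace ℝ E]
    [SecondCountableTopology E] [MeasurableSpace E] [BorelSpace E] {ν : Measure E} {h : E → ℝ}
    (hm : Measurable h) (t : E) (hexp : Integrable (fun x => |h x| * Real.exp (‖t‖ * ‖x‖)) ν)
    (hmoment : ∀ d : ℕ, ∫ x, h x * inner ℝ x t ^ d ∂ν = 0) :
    ∫ x, (h x : ℂ) * Complex.exp (inner ℝ x t * Complex.I) ∂ν = 0 := by
  have hterm (d : ℕ) :
      ∫ x, (h x : ℂ) * ((inner ℝ x t * Complex.I) ^ d / d.factorial) ∂ν = 0 := by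
    have hcoe (x : E) : (h x : ℂ) * ((inner ℝ x t * Complex.I) ^ d / d.factorial) =
        Complex.I ^ d / d.factorial * ((h x * inner ℝ x t ^ d : ℝ) : ℂ) := by
      push_cast
      ring
    simp only [hcoe]
    rw [integral_const_mul, integral_complex_ofReal, hmoment d, Complex.ofReal_zero, mul_zero]
  have hsum := hasSum_integral_of_dominated_convergence (μ := ν)
    (F := fun (d : ℕ) x => (h x : ℂ) * ((inner ℝ x t * Complex.I) ^ d / d.factorial))
    (f := fun x => (h x : ℂ) * Complex.exp (inner ℝ x t * Complex.I))
    (fun d x => |h x| * ((‖t‖ * ‖x‖) ^ d / d.factorial)) (fun d => by fun_prop) ?_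
    (Eventually.of_forall fun x => (Real.summable_pow_div_factorial _).mul_left _) ?_
    (Eventually.of_forall fun x => ?_)
  · simp only [hterm] at hsum
    exact hsum.unique hasSum_zero
  · refine fun d => Eventually.of_forall fun x => ?_
    rw [norm_mul, norm_div, norm_pow, norm_mul, Complex.norm_I, mul_one, Complex.norm_real,
      Complex.norm_real, Complex.norm_natCast, mul_comm ‖t‖]
    gcongr
    · exact le_rfl
    · exact norm_inner_le_norm x t
  · refine hexp.congr (Eventually.of_forall fun x => ?_)
    simp only [tsum_mul_left, Real.exp_eq_exp_ℝ, NormedSpace.exp_eq_tsum_div]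
  · have hseries := NormedSpace.expSeries_div_hasSum_exp (inner ℝ x t * Complex.I : ℂ)
    rw [← Complex.exp_eq_exp_ℂ] at hseries
    exact hseries.mul_left _

theorem ae_eq_zero_of_integral_mul_polyLT_eq_zero {ι : Type*} [Fintype ι]
    {ν : Measure (EuclideanSpace ℝ ι)} [IsFiniteMeasure ν]
    (hexp : ∀ A, Integrable (fun x => Real.exp (A * ‖x‖)) ν) {h : EuclideanSpace ℝ ι → ℝ}
    (hm : Measurable h) (hh : MemLp h 2 ν)
    (horth : ∀ j, ∀ q ∈ polyLT ι j, ∫ x, h x * q x ∂ν = 0) : h =ᵐ[ν] 0 := by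
  refine ae_eq_zero_of_integral_mul_exp_inner_eq_zero hm (hh.integrable one_le_two) fun t =>
    integral_mul_exp_inner_eq_zero hm t ?_ fun d => horth _ _ (inner_pow_mem_polyLT t d)
  have hexp_memLp : MemLp (fun x => Real.exp (‖t‖ * ‖x‖)) 2 ν := by
    rw [memLp_two_iff_integrable_sq (by fun_prop)]
    refine (hexp (2 * ‖t‖)).congr (Eventually.of_forall fun x => ?_)
    simp only [← Real.exp_nat_mul, Nat.cast_ofNat, mul_assoc]
  exact hh.abs.integrable_mul hexp_memLp

end Completeness

/-! ### Symmetric operators triangular along a filtration -/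

section Triangular

variable {P H : Type*} [AddCommGroup P] [Module ℝ P] [NormedAddCommGroup H] [InnerProductSpace ℝ H]

/-- A densely defined symmetric operator `L` on `H`, presented by `T : P → H`, which parametrizes
its domain, and `B = L ∘ T`; on the graded piece `F (M + 1) / F M` it is multiplication by `ρ M`.
The model is the Ornstein-Uhlenbeck operator on polynomials filtered by degree. -/
structure IsSymmTriangular (ρ : ℝ) (T B : P →ₗ[ℝ] H) (F : ℕ → Submodule ℝ P) : Prop where
  symm : ∀ p q, inner ℝ (B p) (T q) = inner ℝ (T p) (B q)
  mono : Monotone F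
  zero : F 0 = ⊥
  triangular : ∀ M, ∀ p ∈ F (M + 1), B p - (ρ * M) • T p ∈ (F M).map T

namespace IsSymmTriangular

variable {ρ : ℝ} {T B : P →ₗ[ℝ] H} {F : ℕ → Submodule ℝ P} {p : P} {m M : ℕ}

theorem mem_map (h : IsSymmTriangular ρ T B F) (hp : p ∈ F M) : B p ∈ (F M).map T := by
  cases M with
  | zero =>
    rw [h.zero, Submodule.mem_bot] at hp
    simp [hp]
  | succ M =>
    have hsub := Submodule.map_mono (h.mono M.le_succ) (h.triangular M p hp)
    simpa using add_mem hsub (Submodule.smul_mem _ (ρ * M) (Submodule.mem_map_of_mem hp))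

theorem inner_eq_of_mem_orthogonal (h : IsSymmTriangular ρ T B F) (hp : p ∈ F (M + 1))
    (horth : T p ∈ ((F M).map T)ᗮ) : inner ℝ (B p) (T p) = ρ * M * ‖T p‖ ^ 2 := by
  have hinner := Submodule.inner_right_of_mem_orthogonal (h.triangular M p hp) horth
  rw [inner_sub_left, real_inner_smul_left, real_inner_self_eq_norm_sq] at hinner
  linarith

theorem mul_norm_sq_le_inner [∀ M, FiniteDimensional ℝ (F M)] (h : IsSymmTriangular ρ T B F)
    (hρ : 0 ≤ ρ) (hp : p ∈ F M) (horth : T p ∈ ((F m).map T)ᗮ) :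
    ρ * m * ‖T p‖ ^ 2 ≤ inner ℝ (B p) (T p) := by
  induction M generalizing p with
  | zero =>
    rw [h.zero, Submodule.mem_bot] at hp
    simp [hp]
  | succ M ih =>
    rcases Nat.lt_or_ge M m with hMm | hmM
    · have hzero : T p = 0 := inner_self_eq_zero.1 (Submodule.inner_right_of_mem_orthogonal
        (Submodule.mem_map_of_mem (h.mono hMm hp)) horth)
      simp [hzero]
    · obtain ⟨r, hr, hTr⟩ := ((F M).map T).starProjection_apply_mem (T p)
      have hperp : T (p - r) ∈ ((F M).map T)ᗮ := by
        rw [map_sub, hTr]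
        exact Submodule.sub_starProjection_mem_orthogonal _
      have hTr_orth : T r ∈ ((F m).map T)ᗮ := by
        simpa using sub_mem horth
          (Submodule.orthogonal_le (Submodule.map_mono (h.mono hmM)) hperp)
      have hcross := Submodule.inner_right_of_mem_orthogonal (h.mem_map hr) hperp
      have hcross' : inner ℝ (B (p - r)) (T r) = 0 := by rw [h.symm, real_inner_comm, hcross]
      have hTcross := Submodule.inner_right_of_mem_orthogonal (Submodule.mem_map_of_mem hr) hperp
      have htop := h.inner_eq_of_mem_orthogonal (sub_mem hp (h.mono M.le_succ hr)) hperp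
      rw [← add_sub_cancel r p, map_add, map_add, norm_add_sq_real, inner_add_left, inner_add_right,
        inner_add_right, hTcross, hcross, hcross', htop]
      have hscale : ρ * m * ‖T (p - r)‖ ^ 2 ≤ ρ * M * ‖T (p - r)‖ ^ 2 := by gcongr
      linarith [ih hr hTr_orth]

theorem mul_norm_sq_le_of_forall_le [∀ M, FiniteDimensional ℝ (F M)]
    (h : IsSymmTriangular ρ T B F) (hρ : 0 ≤ ρ)
    (hdense : (⨆ M, (F M).map T).topologicalClosure = ⊤) {x : H} {D : ℝ}
    (horth : x ∈ ((F m).map T)ᗮ)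
    (hD : ∀ p, 2 * inner ℝ x (B p) - inner ℝ (T p) (B p) ≤ D) : ρ * m * ‖x‖ ^ 2 ≤ D := by
  have hlim := Submodule.starProjection_tendsto_self (fun M => (F M).map T)
    (fun _ _ hMN => Submodule.map_mono (h.mono hMN)) x hdense.ge
  refine le_of_tendsto ((hlim.norm.pow 2).const_mul (ρ * m)) ?_
  filter_upwards [eventually_ge_atTop m] with M hmM
  obtain ⟨p, hp, hTp⟩ := ((F M).map T).starProjection_apply_mem x
  have hperp : x - T p ∈ ((F M).map T)ᗮ := by
    rw [hTp]
    exact Submodule.sub_starProjection_mem_orthogonal _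
  have hTp_orth : T p ∈ ((F m).map T)ᗮ := by
    simpa using sub_mem horth (Submodule.orthogonal_le (Submodule.map_mono (h.mono hmM)) hperp)
  have hinner := Submodule.inner_left_of_mem_orthogonal (h.mem_map hp) hperp
  rw [inner_sub_left] at hinner
  have hspec := h.mul_norm_sq_le_inner hρ hp hTp_orth
  rw [real_inner_comm] at hspec
  rw [← hTp]
  linarith [hD p]

end IsSymmTriangular

end Triangular

/-! ### Polynomials in `L²(e^{-W} dx)` -/

section PolyLp

theorem inner_toLp_toLp {Ω : Type*} [MeasurableSpace Ω] {ν : Measure Ω} {f g : Ω → ℝ}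
    (hf : MemLp f 2 ν) (hg : MemLp g 2 ν) :
    inner ℝ (hf.toLp f) (hg.toLp g) = ∫ x, f x * g x ∂ν := by
  rw [L2.inner_def]
  refine integral_congr_ae ?_
  filter_upwards [hf.coeFn_toLp, hg.coeFn_toLp] with x hfx hgx
  rw [hfx, hgx, real_inner_eq_re_inner, mul_comm]
  rfl

theorem norm_toLp_sq {Ω : Type*} [MeasurableSpace Ω] {ν : Measure Ω} {f : Ω → ℝ}
    (hf : MemLp f 2 ν) : ‖hf.toLp f‖ ^ 2 = ∫ x, f x ^ 2 ∂ν := by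
  rw [← real_inner_self_eq_norm_sq, inner_toLp_toLp hf hf]
  simp only [sq]

variable {ι : Type*} [Fintype ι] {W f : EuclideanSpace ℝ ι → ℝ} {j : ℕ}

/-- The inclusion of polynomials in `L²(e^{-W} dx)`. -/
noncomputable def polyToLp (hW : Continuous W) (hd : HasExpDecay W) :
    MvPolynomial ι ℝ →ₗ[ℝ] Lp ℝ 2 (expNegMeasure W) where
  toFun p := (memLp_of_mem_polyLT hW hd (polyFun_mem_polyLT p)).toLp
  map_add' p q := by
    simp only [map_add]
    rfl
  map_smul' c p := by
    simp only [map_smul]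
    rfl

/-- The weighted Laplacian of `e^{-W} dx` from polynomials to `L²(e^{-W} dx)`. -/
noncomputable def weightedLaplacianToLp (hW : ContDiff ℝ 1 W) (hd : HasExpDecay W) :
    MvPolynomial ι ℝ →ₗ[ℝ] Lp ℝ 2 (expNegMeasure W) where
  toFun p := (memLp_weightedLaplacian_of_mem_polyLT hW hd (polyFun_mem_polyLT p)).toLp
  map_add' p q := by
    rw [← MemLp.toLp_add]
    congr 1
    ext x
    simp only [weightedLaplacian, partialDeriv_polyFun]
    simp only [map_add, Pi.add_apply, weightedLaplacian, partialDeriv_polyFun,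
      ← Finset.sum_add_distrib]
    exact Finset.sum_congr rfl fun i _ => by ring
  map_smul' c p := by
    rw [RingHom.id_apply, ← MemLp.toLp_const_smul]
    congr 1
    ext x
    simp only [weightedLaplacian, partialDeriv_polyFun]
    simp only [Derivation.map_smul, map_smul, Pi.smul_apply, weightedLaplacian,
      partialDeriv_polyFun, smul_eq_mul,
      Finset.mul_sum]
    exact Finset.sum_congr rfl fun i _ => by ring

theorem mem_map_polyToLp_iff (hW : Continuous W) (hd : HasExpDecay W)
    {u : Lp ℝ 2 (expNegMeasure W)} : u ∈ (mvPolyLT ι j).map (polyToLp hW hd) ↔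
      ∃ q, ∃ hq : q ∈ polyLT ι j, (memLp_of_mem_polyLT hW hd hq).toLp q = u := by
  constructor
  · rintro ⟨p, hp, rfl⟩
    exact ⟨_, hp, rfl⟩
  · rintro ⟨_, ⟨p, hp, rfl⟩, rfl⟩
    exact ⟨p, ⟨p, hp, rfl⟩, rfl⟩

theorem mem_orthogonal_map_polyToLp_iff (hW : Continuous W) (hd : HasExpDecay W)
    (hf : MemLp f 2 (expNegMeasure W)) : hf.toLp f ∈ ((mvPolyLT ι j).map (polyToLp hW hd))ᗮ ↔
      ∀ q ∈ polyLT ι j, ∫ x, f x * q x ∂expNegMeasure W = 0 := by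
  simp only [Submodule.mem_orthogonal', mem_map_polyToLp_iff, forall_exists_index]
  constructor
  · intro h q hq
    rw [← inner_toLp_toLp hf (memLp_of_mem_polyLT hW hd hq)]
    exact h _ q hq rfl
  · rintro h _ q hq rfl
    rw [inner_toLp_toLp hf (memLp_of_mem_polyLT hW hd hq), h q hq]

theorem topologicalClosure_iSup_map_polyToLp [IsFiniteMeasure (expNegMeasure W)]
    (hW : Continuous W) (hd : HasExpDecay W)
    (hexp : ∀ A, Integrable (fun x => Real.exp (A * ‖x‖)) (expNegMeasure W)) :
    (⨆ j, (mvPolyLT ι j).map (polyToLp hW hd)).topologicalClosure = ⊤ := by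
  rw [Submodule.topologicalClosure_eq_top_iff, Submodule.eq_bot_iff]
  intro u hu
  refine Lp.eq_zero_iff_ae_eq_zero.2 (ae_eq_zero_of_integral_mul_polyLT_eq_zero hexp
    (Lp.stronglyMeasurable u).measurable (Lp.memLp u) fun j => ?_)
  rw [← mem_orthogonal_map_polyToLp_iff hW hd (Lp.memLp u), Lp.toLp_coeFn]
  exact Submodule.orthogonal_le (le_iSup _ j) hu

theorem inner_toLp_weightedLaplacianToLp (hf : LocallyLipschitz f)
    (hfL : MemLp f 2 (expNegMeasure W)) (hdf : ∀ i, MemLp (partialDeriv i f) 2 (expNegMeasure W))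
    (hW : ContDiff ℝ 1 W) (hd : HasExpDecay W) (p : MvPolynomial ι ℝ) :
    inner ℝ (hfL.toLp f) (weightedLaplacianToLp hW hd p) =
      ∫ x, carreDuChamp f (polyFun ι p) x ∂expNegMeasure W := by
  rw [integral_carreDuChamp_of_mem_polyLT hf hfL hdf hW hd (polyFun_mem_polyLT p)]
  exact inner_toLp_toLp hfL
    (memLp_weightedLaplacian_of_mem_polyLT hW hd (polyFun_mem_polyLT p))

theorem inner_polyToLp_weightedLaplacianToLp (hW : ContDiff ℝ 1 W) (hd : HasExpDecay W)
    (p q : MvPolynomial ι ℝ) :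
    inner ℝ (polyToLp hW.continuous hd p) (weightedLaplacianToLp hW hd q) =
      ∫ x, carreDuChamp (polyFun ι p) (polyFun ι q) x ∂expNegMeasure W :=
  inner_toLp_weightedLaplacianToLp (contDiff_polyFun p (n := 1)).locallyLipschitz
    (memLp_of_mem_polyLT hW.continuous hd (polyFun_mem_polyLT p))
    (memLp_partialDeriv_of_mem_polyLT hW.continuous hd (polyFun_mem_polyLT p)) hW hd q

theorem two_mul_inner_sub_inner_le (hf : LocallyLipschitz f) (hfL : MemLp f 2 (expNegMeasure W))
    (hdf : ∀ i, MemLp (partialDeriv i f) 2 (expNegMeasure W)) (hW : ContDiff ℝ 1 W)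
    (hd : HasExpDecay W) (p : MvPolynomial ι ℝ) :
    2 * inner ℝ (hfL.toLp f) (weightedLaplacianToLp hW hd p) -
        inner ℝ (polyToLp hW.continuous hd p) (weightedLaplacianToLp hW hd p) ≤
      ∫ x, carreDuChamp f f x ∂expNegMeasure W := by
  have hdp := memLp_partialDeriv_of_mem_polyLT hW.continuous hd (polyFun_mem_polyLT p)
  have hfp : Integrable (fun x => 2 * carreDuChamp f (polyFun ι p) x) (expNegMeasure W) :=
    (integrable_carreDuChamp hdf hdp).const_mul 2
  rw [inner_toLp_weightedLaplacianToLp hf hfL hdf, inner_polyToLp_weightedLaplacianToLp,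
    ← integral_const_mul, ← integral_sub hfp (integrable_carreDuChamp hdp hdp)]
  refine integral_mono (hfp.sub (integrable_carreDuChamp hdp hdp)) (integrable_carreDuChamp hdf hdf)
    fun x => ?_
  simp only [carreDuChamp, Finset.mul_sum, ← Finset.sum_sub_distrib]
  refine Finset.sum_le_sum fun i _ => ?_
  linarith [sq_nonneg (partialDeriv i f x - partialDeriv i (polyFun ι p) x)]

end PolyLp

/-! ### The Gaussian -/

section Gaussian

/-- The quadratic potential of the Gaussian measures; `c` accounts for the normalization. -/
noncomputable def gaussianPotential {E : Type*} [Norm E] (ρ c : ℝ) (x : E) : ℝ :=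
  ρ / 2 * ‖x‖ ^ 2 + c

theorem exp_mul_norm_mul_exp_neg_gaussianPotential_le {E : Type*} [SeminormedAddCommGroup E]
    {ρ : ℝ} (hρ : 0 < ρ) (c A : ℝ) (x : E) :
    Real.exp (A * ‖x‖) * Real.exp (-gaussianPotential ρ c x) ≤
      Real.exp ((A + 1) ^ 2 / (2 * ρ) - c) * Real.exp (-(1 * ‖x‖)) := by
  rw [← Real.exp_add, ← Real.exp_add, Real.exp_le_exp, gaussianPotential]
  have hsq : 0 ≤ (ρ * ‖x‖ - (A + 1)) ^ 2 / (2 * ρ) := by positivity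
  have hexpand : (ρ * ‖x‖ - (A + 1)) ^ 2 / (2 * ρ) =
      ρ / 2 * ‖x‖ ^ 2 - (A + 1) * ‖x‖ + (A + 1) ^ 2 / (2 * ρ) := by
    field_simp
    ring
  linarith

section InnerProductSpace

variable {E : Type*} [NormedAddCommGroup E] [InnerProductSpace ℝ E]

theorem contDiff_gaussianPotential (ρ c : ℝ) {n : WithTop ℕ∞} :
    ContDiff ℝ n (gaussianPotential (E := E) ρ c) :=
  (contDiff_const.mul (contDiff_norm_sq ℝ)).add contDiff_const

theorem fderiv_gaussianPotential (ρ c : ℝ) (x : E) :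
    fderiv ℝ (gaussianPotential ρ c) x = ρ • innerSL ℝ x := by
  have hderiv : HasFDerivAt (gaussianPotential ρ c) ((ρ / 2) • (2 : ℕ) • innerSL ℝ x) x :=
    ((hasStrictFDerivAt_norm_sq x).hasFDerivAt.const_mul (ρ / 2)).add_const c
  rw [hderiv.fderiv, ← Nat.cast_smul_eq_nsmul ℝ, smul_smul, Nat.cast_ofNat,
    div_mul_cancel₀ ρ two_ne_zero]

end InnerProductSpace

variable {ι : Type*} [Fintype ι] {f : EuclideanSpace ℝ ι → ℝ} {ρ : ℝ} {m M : ℕ}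

theorem partialDeriv_gaussianPotential (ρ c : ℝ) (i : ι) (x : EuclideanSpace ℝ ι) :
    partialDeriv i (gaussianPotential ρ c) x = ρ * x i := by
  simp [partialDeriv, fderiv_gaussianPotential]

theorem hasExpDecay_gaussianPotential (hρ : 0 < ρ) (c : ℝ) :
    HasExpDecay (gaussianPotential (E := EuclideanSpace ℝ ι) ρ c) := by
  obtain ⟨C, hC₀, hC⟩ := exists_one_add_pow_le_mul_exp one_pos 2
  refine ⟨1, one_pos, (1 + ρ) ^ 2 * C * Real.exp ((1 + 1) ^ 2 / (2 * ρ) - c), fun x => ?_⟩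
  have hgrad : 1 + ‖fderiv ℝ (gaussianPotential ρ c) x‖ ≤ (1 + ρ) * (1 + ‖x‖) := by
    rw [fderiv_gaussianPotential, norm_smul, Real.norm_of_nonneg hρ.le, innerSL_apply_norm]
    nlinarith [norm_nonneg x]
  calc (1 + ‖fderiv ℝ (gaussianPotential ρ c) x‖) ^ 2 * Real.exp (-gaussianPotential ρ c x)
      ≤ ((1 + ρ) * (1 + ‖x‖)) ^ 2 * Real.exp (-gaussianPotential ρ c x) := by gcongr
    _ ≤ (1 + ρ) ^ 2 * (C * Real.exp (1 * ‖x‖)) * Real.exp (-gaussianPotential ρ c x) := by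
        rw [mul_pow]
        gcongr
        exact hC _ (norm_nonneg x)
    _ = (1 + ρ) ^ 2 * C * (Real.exp (1 * ‖x‖) * Real.exp (-gaussianPotential ρ c x)) := by ring
    _ ≤ (1 + ρ) ^ 2 * C *
          (Real.exp ((1 + 1) ^ 2 / (2 * ρ) - c) * Real.exp (-(1 * ‖x‖))) :=
        mul_le_mul_of_nonneg_left
          (exp_mul_norm_mul_exp_neg_gaussianPotential_le hρ c 1 x) (by positivity)
    _ = (1 + ρ) ^ 2 * C * Real.exp ((1 + 1) ^ 2 / (2 * ρ) - c) * Real.exp (-(1 * ‖x‖)) := by ring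

theorem integrable_exp_mul_norm_gaussianPotential (hρ : 0 < ρ) (c A : ℝ) :
    Integrable (fun x : EuclideanSpace ℝ ι => Real.exp (A * ‖x‖))
      (expNegMeasure (gaussianPotential ρ c)) := by
  have hW : Continuous (gaussianPotential (E := EuclideanSpace ℝ ι) ρ c) :=
    (contDiff_gaussianPotential ρ c (n := 0)).continuous
  rw [integrable_expNegMeasure_iff hW]
  refine ((integrable_one_add_norm_pow_mul_exp_neg volume one_pos 0).const_mul
    (Real.exp ((A + 1) ^ 2 / (2 * ρ) - c))).mono' (by fun_prop) (Eventually.of_forall fun x => ?_)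
  rw [Real.norm_of_nonneg (by positivity), pow_zero, one_mul]
  exact exp_mul_norm_mul_exp_neg_gaussianPotential_le hρ c A x

theorem isFiniteMeasure_gaussianPotential (hρ : 0 < ρ) (c : ℝ) :
    IsFiniteMeasure (expNegMeasure (gaussianPotential (E := EuclideanSpace ℝ ι) ρ c)) := by
  have hone := integrable_exp_mul_norm_gaussianPotential (ι := ι) hρ c 0
  simp only [zero_mul, Real.exp_zero] at hone
  exact (integrable_const_iff_isFiniteMeasure one_ne_zero).1 hone

theorem weightedLaplacian_gaussianPotential_sub_mem_polyLT (ρ c : ℝ)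
    (hf : f ∈ polyLT ι (M + 1)) :
    (fun x => weightedLaplacian (gaussianPotential ρ c) f x - ρ * M * f x) ∈ polyLT ι M := by
  have heuler := (polyLT ι M).smul_mem ρ (sum_mul_partialDeriv_sub_mem_polyLT hf)
  have hlaplacian : ∑ i, partialDeriv i (partialDeriv i f) ∈ polyLT ι M :=
    Submodule.sum_mem _ fun i _ =>
      partialDeriv_mem_polyLT (polyLT_mono M.le_succ (partialDeriv_mem_polyLT hf i)) i
  convert (polyLT ι M).sub_mem heuler hlaplacian using 1
  ext x
  simp only [weightedLaplacian, partialDeriv_gaussianPotential, Pi.sub_apply, Pi.smul_apply,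
    smul_eq_mul, Finset.sum_apply, Finset.sum_sub_distrib, mul_sub, Finset.mul_sum,
    mul_comm (partialDeriv _ f x), mul_assoc]
  ring

theorem isSymmTriangular_gaussianPotential (hρ : 0 < ρ) (c : ℝ) :
    IsSymmTriangular ρ
      (polyToLp (ι := ι) (contDiff_gaussianPotential ρ c (n := 0)).continuous
        (hasExpDecay_gaussianPotential hρ c))
      (weightedLaplacianToLp (contDiff_gaussianPotential ρ c)
        (hasExpDecay_gaussianPotential hρ c)) (mvPolyLT ι) where
  symm p q := by
    rw [real_inner_comm, inner_polyToLp_weightedLaplacianToLp,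
      inner_polyToLp_weightedLaplacianToLp]
    simp only [carreDuChamp, mul_comm]
  mono _ _ h := Submodule.comap_mono (polyLT_mono h)
  zero := by
    rw [mvPolyLT, polyLT_zero, Submodule.comap_bot]
    exact LinearMap.ker_eq_bot.2 polyFun_injective
  triangular M p hp := (mem_map_polyToLp_iff _ _).2
    ⟨_, weightedLaplacian_gaussianPotential_sub_mem_polyLT ρ c hp, rfl⟩

theorem mul_integral_sq_le_integral_carreDuChamp (hρ : 0 < ρ) (c : ℝ) (hf : LocallyLipschitz f)
    (hfL : MemLp f 2 (expNegMeasure (gaussianPotential ρ c)))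
    (hdf : ∀ i, MemLp (partialDeriv i f) 2 (expNegMeasure (gaussianPotential ρ c)))
    (horth : ∀ q ∈ polyLT ι m, ∫ x, f x * q x ∂expNegMeasure (gaussianPotential ρ c) = 0) :
    ρ * m * ∫ x, f x ^ 2 ∂expNegMeasure (gaussianPotential ρ c) ≤
      ∫ x, carreDuChamp f f x ∂expNegMeasure (gaussianPotential ρ c) := by
  have hfin := isFiniteMeasure_gaussianPotential (ι := ι) hρ c
  have hdense := topologicalClosure_iSup_map_polyToLp
    (contDiff_gaussianPotential ρ c (n := 0)).continuous (hasExpDecay_gaussianPotential hρ c)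
    (integrable_exp_mul_norm_gaussianPotential (ι := ι) hρ c)
  rw [← norm_toLp_sq hfL]
  exact (isSymmTriangular_gaussianPotential hρ c).mul_norm_sq_le_of_forall_le hρ.le hdense
    ((mem_orthogonal_map_polyToLp_iff _ _ hfL).2 horth)
    (two_mul_inner_sub_inner_le hf hfL hdf _ _)

theorem exists_gaussRho_eq_expNegMeasure (n : ℕ) (hρ : 0 < ρ) :
    ∃ c, gaussRho n ρ = expNegMeasure (gaussianPotential ρ c) := by
  have hW := (contDiff_gaussianPotential (E := EuclideanSpace ℝ (Fin n)) ρ 0 (n := 0)).continuous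
  have hfin := isFiniteMeasure_gaussianPotential (ι := Fin n) hρ 0
  have hopen := isOpenPosMeasure_expNegMeasure hW
  set Z := expNegMeasure (gaussianPotential (E := EuclideanSpace ℝ (Fin n)) ρ 0) Set.univ
  have hZ_top : Z ≠ ⊤ := measure_ne_top _ _
  have hZ_pos : 0 < Z.toReal :=
    ENNReal.toReal_pos (isOpen_univ.measure_pos _ Set.univ_nonempty).ne' hZ_top
  have hdensity : (volume.withDensity fun x : EuclideanSpace ℝ (Fin n) =>
      ENNReal.ofReal (Real.exp (-ρ * ‖x‖ ^ 2 / 2))) = expNegMeasure (gaussianPotential ρ 0) := by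
    simp only [expNegMeasure, gaussianPotential]
    ring_nf
  have hadd : gaussianPotential (E := EuclideanSpace ℝ (Fin n)) ρ (Real.log Z.toReal) =
      fun x => gaussianPotential ρ 0 x + Real.log Z.toReal := by
    ext x
    simp [gaussianPotential]
  refine ⟨Real.log Z.toReal, ?_⟩
  rw [gaussRho, hdensity, hadd,
    expNegMeasure_add_const hW, Real.exp_neg, Real.exp_log hZ_pos,
    ENNReal.ofReal_inv_of_pos hZ_pos, ENNReal.ofReal_toReal hZ_top]

end Gaussian

/-! ### Finite-dimensional spaces of Sobolev functions -/

section Sobolev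

theorem exists_forall_norm_le_mul_norm_of_injective {M E G : Type*} [AddCommGroup M] [Module ℝ M]
    [FiniteDimensional ℝ M] [NormedAddCommGroup E] [NormedSpace ℝ E] [SeminormedAddCommGroup G]
    [NormedSpace ℝ G] {J : M →ₗ[ℝ] E} (hJ : Function.Injective J) (D : M →ₗ[ℝ] G) :
    ∃ C, ∀ u, ‖D u‖ ≤ C * ‖J u‖ := by
  let e := LinearEquiv.ofInjective J hJ
  let T := (D ∘ₗ e.symm.toLinearMap).toContinuousLinearMap
  refine ⟨‖T‖, fun u => ?_⟩
  simpa [T, e] using T.le_opNorm (e u)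

variable {ι : Type*} [Fintype ι] {W f : EuclideanSpace ℝ ι → ℝ}

theorem eq_zero_of_integral_sq_eq_zero (hW : Continuous W) (hf : Continuous f)
    (hfL : MemLp f 2 (expNegMeasure W)) (h : ∫ x, f x ^ 2 ∂expNegMeasure W = 0) : f = 0 := by
  have := isOpenPosMeasure_expNegMeasure hW
  rw [integral_eq_zero_iff_of_nonneg (fun x => sq_nonneg _) hfL.integrable_sq] at h
  refine (hf.ae_eq_iff_eq (expNegMeasure W) continuous_zero).1 ?_
  filter_upwards [h] with x hx
  simpa using hx

namespace memW12Lip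

theorem continuous (hf : memW12Lip (expNegMeasure W) f) : Continuous f :=
  hf.1.continuous

theorem memLp (hf : memW12Lip (expNegMeasure W) f) : MemLp f 2 (expNegMeasure W) := by
  refine (memLp_two_iff_integrable_sq hf.continuous.aestronglyMeasurable).2
    ⟨(hf.continuous.pow 2).aestronglyMeasurable, ?_⟩
  exact (hasFiniteIntegral_iff_ofReal (Eventually.of_forall fun x => sq_nonneg (f x))).2
    (le_self_add.trans_lt hf.2)

theorem ae_differentiableAt (hf : memW12Lip (expNegMeasure W) f) :
    ∀ᵐ x ∂expNegMeasure W, DifferentiableAt ℝ f x :=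
  ae_expNegMeasure_of_ae (ae_differentiableAt_of_locallyLipschitz volume hf.1)

variable [Nonempty ι]

theorem localLip_sq_ae_eq (hf : memW12Lip (expNegMeasure W) f) :
    (fun x => localLip f x ^ 2) =ᵐ[expNegMeasure W] carreDuChamp f f := by
  filter_upwards [hf.ae_differentiableAt] with x hx
  rw [localLip_eq_norm_fderiv hx, norm_fderiv_sq]

theorem integrable_carreDuChamp_self (hf : memW12Lip (expNegMeasure W) f) :
    Integrable (carreDuChamp f f) (expNegMeasure W) := by
  have hmeas : Measurable (carreDuChamp f f) := Finset.measurable_fun_sum _ fun i _ =>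
    (measurable_partialDeriv f i).mul (measurable_partialDeriv f i)
  refine Integrable.congr ⟨hmeas.aestronglyMeasurable.congr hf.localLip_sq_ae_eq.symm, ?_⟩
    hf.localLip_sq_ae_eq
  exact (hasFiniteIntegral_iff_ofReal (Eventually.of_forall fun x => sq_nonneg _)).2
    (le_add_self.trans_lt hf.2)

theorem memLp_partialDeriv (hf : memW12Lip (expNegMeasure W) f) (i : ι) :
    MemLp (partialDeriv i f) 2 (expNegMeasure W) := by
  have hmeas := measurable_partialDeriv f i
  refine (memLp_two_iff_integrable_sq hmeas.aestronglyMeasurable).2 <|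
    hf.integrable_carreDuChamp_self.mono' (hmeas.pow_const 2).aestronglyMeasurable <|
      Eventually.of_forall fun x => ?_
  rw [Real.norm_of_nonneg (sq_nonneg _)]
  exact sq_partialDeriv_le i f x

end memW12Lip

variable {F : Submodule ℝ (EuclideanSpace ℝ ι → ℝ)}

/-- The map from a space of Sobolev functions to `L²(e^{-W} dx)`. -/
noncomputable def sobolevToLp (hF : ∀ f ∈ F, memW12Lip (expNegMeasure W) f) :
    F →ₗ[ℝ] Lp ℝ 2 (expNegMeasure W) where
  toFun f := (hF f f.2).memLp.toLp f
  map_add' _ _ := rfl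
  map_smul' _ _ := rfl

theorem sobolevToLp_injective (hW : Continuous W)
    (hF : ∀ f ∈ F, memW12Lip (expNegMeasure W) f) : Function.Injective (sobolevToLp hF) := by
  rw [← LinearMap.ker_eq_bot, LinearMap.ker_eq_bot']
  intro f hf
  have hfL := (hF f f.2).memLp
  have hzero : hfL.toLp f.1 = 0 := hf
  refine Subtype.ext (eq_zero_of_integral_sq_eq_zero hW (hF f f.2).continuous hfL ?_)
  rw [← norm_toLp_sq hfL, hzero, norm_zero, zero_pow two_ne_zero]

variable [Nonempty ι]

/-- The partial derivative from a space of Sobolev functions to `L²(e^{-W} dx)`. -/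
noncomputable def partialDerivToLp (hF : ∀ f ∈ F, memW12Lip (expNegMeasure W) f) (i : ι) :
    F →ₗ[ℝ] Lp ℝ 2 (expNegMeasure W) where
  toFun f := ((hF f f.2).memLp_partialDeriv i).toLp (partialDeriv i f)
  map_add' f g := by
    rw [← MemLp.toLp_add]
    refine MemLp.toLp_congr _ _ ?_
    filter_upwards [(hF f f.2).ae_differentiableAt, (hF g g.2).ae_differentiableAt] with x hfx hgx
    exact partialDeriv_add i hfx hgx
  map_smul' c f := by
    rw [RingHom.id_apply, ← MemLp.toLp_const_smul]
    refine MemLp.toLp_congr _ _ ?_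
    filter_upwards [(hF f f.2).ae_differentiableAt] with x hfx
    exact partialDeriv_const_mul i c hfx

theorem exists_integral_localLip_sq_le [FiniteDimensional ℝ F] (hW : Continuous W)
    (hF : ∀ f ∈ F, memW12Lip (expNegMeasure W) f) :
    ∃ C, ∀ f ∈ F, ∫ x, localLip f x ^ 2 ∂expNegMeasure W ≤
      C * ∫ x, f x ^ 2 ∂expNegMeasure W := by
  choose C hC using fun i =>
    exists_forall_norm_le_mul_norm_of_injective (sobolevToLp_injective hW hF)
      (partialDerivToLp hF i)
  refine ⟨∑ i, C i ^ 2, fun f hf => ?_⟩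
  have hdf := (hF f hf).memLp_partialDeriv
  calc ∫ x, localLip f x ^ 2 ∂expNegMeasure W
      = ∫ x, ∑ i, partialDeriv i f x ^ 2 ∂expNegMeasure W := by
        rw [integral_congr_ae (hF f hf).localLip_sq_ae_eq]
        simp only [carreDuChamp, sq]
    _ = ∑ i, ‖(hdf i).toLp (partialDeriv i f)‖ ^ 2 := by
        simp only [integral_finsetSum _ fun i _ => (hdf i).integrable_sq, norm_toLp_sq]
    _ ≤ ∑ i, C i ^ 2 * ‖(hF f hf).memLp.toLp f‖ ^ 2 := by
        simp only [← mul_pow]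
        gcongr with i
        exact hC i ⟨f, hf⟩
    _ = (∑ i, C i ^ 2) * ∫ x, f x ^ 2 ∂expNegMeasure W := by
        rw [norm_toLp_sq, Finset.sum_mul]

end Sobolev

/-! ### The lower bound -/

section Lower

theorem exists_mem_ne_zero_forall_integral_mul_eq_zero {Ω : Type*} [MeasurableSpace Ω]
    {ν : Measure Ω} {F G : Submodule ℝ (Ω → ℝ)} [FiniteDimensional ℝ F] [FiniteDimensional ℝ G]
    (hF : ∀ f ∈ F, MemLp f 2 ν) (hG : ∀ g ∈ G, MemLp g 2 ν)
    (hFG : Module.finrank ℝ G < Module.finrank ℝ F) :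
    ∃ f ∈ F, f ≠ 0 ∧ ∀ g ∈ G, ∫ x, f x * g x ∂ν = 0 := by
  have hint (f : F) (g : G) : Integrable (fun x => f.1 x * g.1 x) ν :=
    (hF f f.2).integrable_mul (hG g g.2)
  let Φ : F →ₗ[ℝ] Module.Dual ℝ G := LinearMap.mk₂ ℝ (fun f g => ∫ x, f.1 x * g.1 x ∂ν)
    (fun f f' g => by
      rw [← integral_add (hint f g) (hint f' g)]
      simp [add_mul])
    (fun a f g => by
      rw [smul_eq_mul, ← integral_const_mul]
      simp [mul_assoc])
    (fun f g g' => by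
      rw [← integral_add (hint f g) (hint f g')]
      simp [mul_add])
    (fun a f g => by
      rw [smul_eq_mul, ← integral_const_mul]
      simp [mul_left_comm])
  have hker : LinearMap.ker Φ ≠ ⊥ :=
    LinearMap.ker_ne_bot_of_finrank_lt (Subspace.dual_finrank_eq.trans_lt hFG)
  obtain ⟨f, hf, hf₀⟩ := Submodule.exists_mem_ne_zero_of_ne_bot hker
  exact ⟨f, f.2, fun h => hf₀ (Subtype.ext h), fun g hg =>
    LinearMap.congr_fun (LinearMap.mem_ker.1 hf) ⟨g, hg⟩⟩

variable {ι : Type*} [Fintype ι] [Nonempty ι] {ρ : ℝ} {m k : ℕ}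

theorem memW12Lip_of_mem_polyLT {W f : EuclideanSpace ℝ ι → ℝ} (hW : Continuous W)
    (hd : HasExpDecay W) (hf : f ∈ polyLT ι k) : memW12Lip (expNegMeasure W) f := by
  have hf₁ : ContDiff ℝ 1 f := contDiff_of_mem_polyLT hf
  have hdf := memLp_partialDeriv_of_mem_polyLT hW hd hf
  refine memW12Lip_of_integrable hf₁.locallyLipschitz
    (memLp_of_mem_polyLT hW hd hf).integrable_sq ?_
  simpa only [localLip_eq_norm_fderiv (hf₁.differentiable one_ne_zero _), norm_fderiv_sq]
    using integrable_carreDuChamp hdf hdf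

theorem mul_le_lambdaLip_gaussianPotential (hρ : 0 < ρ) (c : ℝ)
    (hk : Module.finrank ℝ (polyLT ι m) < k) :
    ρ * m ≤ lambdaLip (expNegMeasure (gaussianPotential (E := EuclideanSpace ℝ ι) ρ c)) k := by
  have hW := (contDiff_gaussianPotential (E := EuclideanSpace ℝ ι) ρ c (n := 0)).continuous
  have hd := hasExpDecay_gaussianPotential (ι := ι) hρ c
  obtain ⟨F₀, hF₀, hF₀k⟩ := exists_submodule_le_finrank_eq (le_finrank_polyLT (ι := ι) k)
  have hfin {F : Submodule ℝ (EuclideanSpace ℝ ι → ℝ)} (hFk : Module.finrank ℝ F = k) :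
      FiniteDimensional ℝ F := Module.finite_of_finrank_pos (by omega)
  refine le_lambdaLip ⟨F₀, hF₀k, fun f hf => memW12Lip_of_mem_polyLT hW hd (hF₀ hf)⟩
    (fun F hFk hF => ?_) fun F hFk hF => ?_
  · have := hfin hFk
    exact exists_integral_localLip_sq_le hW hF
  · have := hfin hFk
    obtain ⟨f, hf, hf₀, horth⟩ := exists_mem_ne_zero_forall_integral_mul_eq_zero
      (fun f hf => (hF f hf).memLp) (fun q => memLp_of_mem_polyLT hW hd) (hk.trans_eq hFk.symm)
    refine ⟨f, hf, fun h => hf₀ (eq_zero_of_integral_sq_eq_zero hW (hF f hf).continuous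
      (hF f hf).memLp h), ?_⟩
    rw [integral_congr_ae (hF f hf).localLip_sq_ae_eq]
    exact mul_integral_sq_le_integral_carreDuChamp hρ c (hF f hf).1 (hF f hf).memLp
      (hF f hf).memLp_partialDeriv horth

end Lower

theorem spectral_comparison_semi_log_convex_general
    (n : ℕ) (hn : 1 ≤ n) (ρ : ℝ) (hρ : 0 < ρ)
    (V : EuclideanSpace ℝ (Fin n) → ℝ) (hV : ContDiff ℝ 2 V)
    (hconv : ConvexOn ℝ Set.univ (fun x : EuclideanSpace ℝ (Fin n) => ρ / 2 * ‖x‖ ^ 2 - V x))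
    (μ : Measure (EuclideanSpace ℝ (Fin n)))
    (hμ : μ = volume.withDensity fun x => ENNReal.ofReal (Real.exp (-(V x))))
    [IsFiniteMeasure μ]
    (k : ℕ) (hk : 1 ≤ k) :
    lambdaLip μ k ≤ lambdaLip (gaussRho n ρ) k := by
  have : Nonempty (Fin n) := Fin.pos_iff_nonempty.1 hn
  have hμV : μ = expNegMeasure V := hμ
  subst hμV
  obtain ⟨m, hm_lt, hm_le⟩ := exists_finrank_polyLT_lt_and_le (Fin n) hk
  obtain ⟨c, hc⟩ := exists_gaussRho_eq_expNegMeasure n hρ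
  calc lambdaLip (expNegMeasure V) k ≤ ρ * m :=
        lambdaLip_expNegMeasure_le hρ hV hconv
          (integrable_exp_neg_of_isFiniteMeasure hV.continuous) hm_le
    _ ≤ lambdaLip (gaussRho n ρ) k := hc ▸ mul_le_lambdaLip_gaussianPotential hρ c hm_lt

/-- **Spectral comparison for semi-log-convex measures** (Kolesnikov + Contraction
Principle): if `μ = exp(-V) dx` is a probability measure with `V` smooth and
`∇²V ≤ ρ·Id` (i.e. `x ↦ (ρ/2)|x|² - V(x)` convex), `ρ > 0`, then
`λ_k^Lip(ℝⁿ,|·|,μ) ≤ λ_k^Lip(ℝⁿ,|·|,γ_ρⁿ)` for all `k ≥ 1`. -/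
theorem spectral_comparison_semi_log_convex
    (n : ℕ) (hn : 1 ≤ n) (ρ : ℝ) (hρ : 0 < ρ)
    (V : EuclideanSpace ℝ (Fin n) → ℝ) (hV : ContDiff ℝ (⊤ : ℕ∞) V)
    (hconv : ConvexOn ℝ Set.univ (fun x : EuclideanSpace ℝ (Fin n) => ρ / 2 * ‖x‖ ^ 2 - V x))
    (μ : Measure (EuclideanSpace ℝ (Fin n)))
    (hμ : μ = volume.withDensity fun x => ENNReal.ofReal (Real.exp (-(V x))))
    [IsProbabilityMeasure μ]
    (k : ℕ) (hk : 1 ≤ k) :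
    lambdaLip μ k ≤ lambdaLip (gaussRho n ρ) k :=
  spectral_comparison_semi_log_convex_general n hn ρ hρ V (contDiff_infty.1 hV 2) hconv μ hμ k hk
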